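/- arXiv:1208.2747 — 4 statements merged into one kernel-verified Lean document; each statement's English description precedes it below -/
import Mathlib

section
/- Every language L in PCCFL ∪ shuffleCFL satisfies the shuffle-pumping condition; that is, there exists a constant N such that for every word w ∈ L with |w| > N there exist words x, y, z, s, t such that (1) w ∈ x·((s·(y || t)) || z), (2) 1 ≤ |s| and |s·y·t| ≤ N, and (3) x·s^m·y·t^m·z ∈ L for all m ≥ 0. -/
/-- `IsInterleaving w v u` means `u` is an interleaving of `w` and `v`. -/
inductive IsInterleaving {α : Type} : List α → List α → List α → Prop
  | nil : IsInterleaving [] [] []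
  | left {a : α} {w v u : List α} : IsInterleaving w v u → IsInterleaving (a :: w) v (a :: u)
  | right {a : α} {w v u : List α} : IsInterleaving w v u → IsInterleaving w (a :: v) (a :: u)

/-- Shuffle of two languages. -/
def shuffleLang {α : Type} (L K : Set (List α)) : Set (List α) :=
  {u | ∃ w ∈ L, ∃ v ∈ K, IsInterleaving w v u}

/-- A partially-commutative context-free grammar in Greibach form. -/
structure PCGrammar (α : Type) : Type 1 where
  V : Type
  finV : Finite V
  start : V
  prods : Set (V × α × List V)
  finP : prods.Finite
  indep : V → V → Prop
  indep_symm : ∀ {X Y : V}, indep X Y → indep Y X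
  indep_irrefl : ∀ X : V, ¬ indep X X

/-- `PCDerives G γ w` : configuration `γ` derives the empty configuration producing word `w`,
using production steps (at the head) and swap steps of independent adjacent nonterminals. -/
inductive PCDerives {α : Type} (G : PCGrammar α) : List G.V → List α → Prop
  | nil : PCDerives G [] []
  | prod {X : G.V} {a : α} {γ β : List G.V} {w : List α} :
      (X, a, γ) ∈ G.prods → PCDerives G (γ ++ β) w → PCDerives G (X :: β) (a :: w)
  | swap {η β : List G.V} {X Y : G.V} {w : List α} :
      G.indep X Y → PCDerives G (η ++ Y :: X :: β) w → PCDerives G (η ++ X :: Y :: β) w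

/-- The language generated by a PC-grammar. -/
def PCGrammar.lang {α : Type} (G : PCGrammar α) : Set (List α) :=
  {w | PCDerives G [G.start] w}

/-- The class of partially-commutative context-free languages. -/
def IsPCCFL {α : Type} (L : Set (List α)) : Prop :=
  ∃ G : PCGrammar α, G.lang = L

/-- The dependence relation (complement of independence) is transitive. -/
def PCGrammar.depTransitive {α : Type} (G : PCGrammar α) : Prop :=
  ∀ X Y Z : G.V, ¬ G.indep X Y → ¬ G.indep Y Z → ¬ G.indep X Z

/-- The subclass of PCCFL given by grammars with transitive dependence. -/
def IsTrPCCFL {α : Type} (L : Set (List α)) : Prop :=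
  ∃ G : PCGrammar α, G.depTransitive ∧ G.lang = L

/-- Terms of a PA-grammar (shuffle context-free grammar). -/
inductive PATerm (V : Type) : Type
  | eps : PATerm V
  | var (X : V) : PATerm V
  | seq (t u : PATerm V) : PATerm V
  | par (t u : PATerm V) : PATerm V

/-- Structural equivalence of PA-terms: associativity of both compositions,
commutativity of parallel composition, and neutrality of the empty term. -/
inductive PAEq {V : Type} : PATerm V → PATerm V → Prop
  | refl (t : PATerm V) : PAEq t t
  | symm {t u : PATerm V} : PAEq t u → PAEq u t
  | trans {t u v : PATerm V} : PAEq t u → PAEq u v → PAEq t v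
  | seq_assoc (t u v : PATerm V) : PAEq ((t.seq u).seq v) (t.seq (u.seq v))
  | par_assoc (t u v : PATerm V) : PAEq ((t.par u).par v) (t.par (u.par v))
  | par_comm (t u : PATerm V) : PAEq (t.par u) (u.par t)
  | seq_eps_left (t : PATerm V) : PAEq (PATerm.eps.seq t) t
  | seq_eps_right (t : PATerm V) : PAEq (t.seq PATerm.eps) t
  | par_eps (t : PATerm V) : PAEq (t.par PATerm.eps) t
  | seq_congr {t t' u u' : PATerm V} : PAEq t t' → PAEq u u' → PAEq (t.seq u) (t'.seq u')
  | par_congr {t t' u u' : PATerm V} : PAEq t t' → PAEq u u' → PAEq (t.par u) (t'.par u')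

/-- Single steps of a PA-grammar with production set `P`. -/
inductive PAStep {V α : Type} (P : Set (V × α × PATerm V)) : PATerm V → α → PATerm V → Prop
  | prod {X : V} {a : α} {t : PATerm V} : (X, a, t) ∈ P → PAStep P (PATerm.var X) a t
  | seq_left {t t' u : PATerm V} {a : α} : PAStep P t a t' → PAStep P (t.seq u) a (t'.seq u)
  | par_left {t t' u : PATerm V} {a : α} : PAStep P t a t' → PAStep P (t.par u) a (t'.par u)
  | par_right {t u u' : PATerm V} {a : α} : PAStep P u a u' → PAStep P (t.par u) a (t.par u')

/-- `PAGen P t w` : term `t` derives the empty term producing word `w`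
(terms are considered up to structural equivalence). -/
inductive PAGen {V α : Type} (P : Set (V × α × PATerm V)) : PATerm V → List α → Prop
  | done : PAGen P PATerm.eps []
  | eqv {t t' : PATerm V} {w : List α} : PAEq t t' → PAGen P t' w → PAGen P t w
  | step {t t' : PATerm V} {a : α} {w : List α} :
      PAStep P t a t' → PAGen P t' w → PAGen P t (a :: w)

/-- A PA-grammar (shuffle context-free grammar). -/
structure PAGrammar (α : Type) : Type 1 where
  V : Type
  finV : Finite V
  start : V
  prods : Set (V × α × PATerm V)
  finP : prods.Finite

/-- The language generated by a PA-grammar. -/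
def PAGrammar.lang {α : Type} (G : PAGrammar α) : Set (List α) :=
  {w | PAGen G.prods (PATerm.var G.start) w}

/-- The class of languages of PA-grammars (context-free grammars with shuffle). -/
def IsShuffleCFL {α : Type} (L : Set (List α)) : Prop :=
  ∃ G : PAGrammar α, G.lang = L

/-- A single swap of two adjacent letters independent according to `J`. -/
inductive AdjSwap {α : Type} (J : α → α → Prop) : List α → List α → Prop
  | swap (x y : List α) {a b : α} : J a b → AdjSwap J (x ++ a :: b :: y) (x ++ b :: a :: y)

/-- Trace equivalence: finitely many swaps of adjacent independent letters. -/
def TraceEquiv {α : Type} (J : α → α → Prop) : List α → List α → Prop :=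
  Relation.ReflTransGen (AdjSwap J)

/-- Trace closure of a language with respect to letter-independence `J`. -/
def traceClosure {α : Type} (J : α → α → Prop) (L : Set (List α)) : Set (List α) :=
  {w | ∃ v ∈ L, TraceEquiv J v w}

/-- The class of trace closures of context-free languages. -/
def IsTraceCFL {α : Type} (L : Set (List α)) : Prop :=
  ∃ J : α → α → Prop, (∀ a b, J a b → J b a) ∧ (∀ a, ¬ J a a) ∧
    ∃ L₀ : Language α, L₀.IsContextFree ∧ traceClosure J L₀ = L

/-- `listPow s m` is the word `s^m`. -/
def listPow {α : Type} (s : List α) (m : ℕ) : List α :=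
  (List.replicate m s).flatten

/-- The shuffle-pumping condition. -/
def ShufflePumping {α : Type} (L : Set (List α)) : Prop :=
  ∃ N : ℕ, ∀ w ∈ L, w.length > N →
    ∃ x y z s t : List α,
      (∃ yt u : List α, IsInterleaving y t yt ∧ IsInterleaving (s ++ yt) z u ∧ w = x ++ u) ∧
      1 ≤ s.length ∧ (s ++ y ++ t).length ≤ N ∧
      ∀ m : ℕ, x ++ listPow s m ++ y ++ listPow t m ++ z ∈ L

/-- The concatenation-pumping condition. -/
def ConcatPumping {α : Type} (L : Set (List α)) : Prop :=
  ∃ N : ℕ, ∀ w ∈ L, w.length > N →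
    ∃ x y z s t : List α,
      w = x ++ y ++ z ∧
      1 ≤ (s ++ t).length ∧ (s ++ t).length ≤ N ∧
      ∀ m : ℕ, x ++ listPow s m ++ y ++ listPow t m ++ z ∈ L

/-!
Every production emits one letter, so a derivation of `w` is a tree with `|w|` nodes of bounded
branching. If `w` is long, there is a subtree whose root label recurs strictly below the root, and a
minimal such subtree `U` has bounded size; let `U'` be the subtree at such a recurrence. Cut `w`
where `U` is first rewritten: before the cut lies `x`, and after it the word `v` generated by `U` is
interleaved with a word `z` that can be postponed until `v` is finished. Cutting `v` in the same
way at `U'` gives `s`, `y` and `t`, and `s ≠ []` because the root of `U` emits its letter before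
`U'` is rewritten. As `U` and `U'` have the same label, the context `(s, t)` can be iterated.

The postponement is a property of whole derivations: contexts of this kind do not compose, because
the outer one only allows `z` to be pushed behind `v`, not to be shuffled with it.
-/

theorem listPow_succ {α : Type} (s : List α) (m : ℕ) : listPow s (m + 1) = s ++ listPow s m := by
  simp [listPow, List.replicate_succ]

theorem listPow_succ' {α : Type} (s : List α) (m : ℕ) : listPow s (m + 1) = listPow s m ++ s := by
  simp [listPow, List.replicate_succ']

namespace IsInterleaving

variable {α : Type} {a b c a' b' c' : List α}

theorem length_eq (h : IsInterleaving a b c) : c.length = a.length + b.length := by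
  induction h with
  | nil => rfl
  | left _ ih => simp only [List.length_cons, ih]; omega
  | right _ ih => simp only [List.length_cons, ih]; omega

theorem symm (h : IsInterleaving a b c) : IsInterleaving b a c := by
  induction h with
  | nil => exact .nil
  | left _ ih => exact .right ih
  | right _ ih => exact .left ih

theorem nil_right (a : List α) : IsInterleaving a [] a := by
  induction a with
  | nil => exact .nil
  | cons _ _ ih => exact .left ih

theorem nil_left (a : List α) : IsInterleaving [] a a := (nil_right a).symm

theorem eq_of_nil_right (h : IsInterleaving a [] c) : c = a := by
  induction c generalizing a with
  | nil => cases h; rfl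
  | cons x c ih => cases h with | left h => rw [ih h]

theorem append (h : IsInterleaving a b c) (h' : IsInterleaving a' b' c') :
    IsInterleaving (a ++ a') (b ++ b') (c ++ c') := by
  induction h with
  | nil => exact h'
  | left _ ih => exact .left ih
  | right _ ih => exact .right ih

theorem append_left (p : List α) (h : IsInterleaving a b c) :
    IsInterleaving (p ++ a) b (p ++ c) :=
  (nil_right p).append h

theorem append_right (p : List α) (h : IsInterleaving a b c) :
    IsInterleaving a (p ++ b) (p ++ c) :=
  (nil_left p).append h

theorem exists_of_append_result (h : IsInterleaving a b (c ++ c')) :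
    ∃ a₁ a₂ b₁ b₂, a = a₁ ++ a₂ ∧ b = b₁ ++ b₂ ∧
      IsInterleaving a₁ b₁ c ∧ IsInterleaving a₂ b₂ c' := by
  induction c generalizing a b with
  | nil => exact ⟨[], a, [], b, rfl, rfl, .nil, h⟩
  | cons x c ih =>
    cases h with
    | left h =>
      obtain ⟨a₁, a₂, b₁, b₂, rfl, rfl, h₁, h₂⟩ := ih h
      exact ⟨x :: a₁, a₂, b₁, b₂, rfl, rfl, .left h₁, h₂⟩
    | right h =>
      obtain ⟨a₁, a₂, b₁, b₂, rfl, rfl, h₁, h₂⟩ := ih h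
      exact ⟨a₁, a₂, x :: b₁, b₂, rfl, rfl, .right h₁, h₂⟩

theorem exists_of_append_left (h : IsInterleaving (a ++ a') b c) :
    ∃ b₁ b₂ c₁ c₂, b = b₁ ++ b₂ ∧ c = c₁ ++ c₂ ∧
      IsInterleaving a b₁ c₁ ∧ IsInterleaving a' b₂ c₂ := by
  induction c generalizing a b with
  | nil =>
    obtain ⟨rfl, rfl⟩ : a = [] ∧ b = [] := by
      have := h.length_eq
      simp only [List.length_nil, List.length_append] at this
      simp only [← List.length_eq_zero_iff]
      omega
    exact ⟨[], [], [], [], rfl, rfl, .nil, h⟩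
  | cons x c ih =>
    rcases a with _ | ⟨y, a⟩
    · exact ⟨[], b, [], x :: c, rfl, rfl, .nil, h⟩
    cases h with
    | left h =>
      obtain ⟨b₁, b₂, c₁, c₂, rfl, rfl, h₁, h₂⟩ := ih h
      exact ⟨b₁, b₂, x :: c₁, c₂, rfl, rfl, .left h₁, h₂⟩
    | right h =>
      obtain ⟨b₁, b₂, c₁, c₂, rfl, rfl, h₁, h₂⟩ := ih (a := y :: a) h
      exact ⟨x :: b₁, b₂, x :: c₁, c₂, rfl, rfl, .right h₁, h₂⟩

theorem exists_assoc {u w : List α} (hu : IsInterleaving a b u) (hw : IsInterleaving u c w) :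
    ∃ v, IsInterleaving b c v ∧ IsInterleaving a v w := by
  induction hw generalizing a b with
  | nil => cases hu; exact ⟨[], .nil, .nil⟩
  | left _ ih =>
    cases hu with
    | left hu => obtain ⟨v, hv, hw⟩ := ih hu; exact ⟨v, hv, .left hw⟩
    | right hu => obtain ⟨v, hv, hw⟩ := ih hu; exact ⟨_, .left hv, .right hw⟩
  | right _ ih => obtain ⟨v, hv, hw⟩ := ih hu; exact ⟨_, .right hv, .right hw⟩

end IsInterleaving

section ShuffleLang

variable {α : Type}

theorem shuffleLang_comm (L M : Set (List α)) : shuffleLang L M = shuffleLang M L := by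
  ext w
  exact ⟨fun ⟨u, hu, v, hv, h⟩ => ⟨v, hv, u, hu, h.symm⟩,
    fun ⟨u, hu, v, hv, h⟩ => ⟨v, hv, u, hu, h.symm⟩⟩

theorem shuffleLang_assoc_subset (L M K : Set (List α)) :
    shuffleLang (shuffleLang L M) K ⊆ shuffleLang L (shuffleLang M K) := by
  rintro w ⟨_, ⟨a, ha, b, hb, hab⟩, c, hc, hw⟩
  obtain ⟨v, hv, hw⟩ := hab.exists_assoc hw
  exact ⟨a, ha, v, ⟨b, hb, c, hc, hv⟩, hw⟩

theorem shuffleLang_assoc (L M K : Set (List α)) :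
    shuffleLang (shuffleLang L M) K = shuffleLang L (shuffleLang M K) := by
  refine (shuffleLang_assoc_subset L M K).antisymm ?_
  rw [shuffleLang_comm L, shuffleLang_comm M, shuffleLang_comm _ K, shuffleLang_comm L]
  exact shuffleLang_assoc_subset K M L

theorem shuffleLang_singleton_nil (L : Set (List α)) : shuffleLang L {[]} = L := by
  ext w
  constructor
  · rintro ⟨u, hu, _, rfl, h⟩
    rwa [h.eq_of_nil_right]
  · exact fun hw => ⟨w, hw, [], rfl, .nil_right w⟩

end ShuffleLang

/-- The pair `(x, z)` is a context for `v` in `w`: the word `w` belongs to `x · (v || z)`, and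
replacing `v` by any word of `M`, with `z` pushed behind it, gives a word of `L`. -/
structure IsShuffleContext {α : Type} (M L : Set (List α)) (x z v w : List α) : Prop where
  exists_interleaving : ∃ u, IsInterleaving v z u ∧ w = x ++ u
  append_mem : ∀ v' ∈ M, x ++ v' ++ z ∈ L

namespace IsShuffleContext

variable {α : Type} {M L K : Set (List α)} {x z v w : List α}

theorem refl (M : Set (List α)) (v : List α) : IsShuffleContext M M [] [] v v where
  exists_interleaving := ⟨v, .nil_right v, rfl⟩
  append_mem v' hv' := by simpa using hv'

theorem cons {a : α} (h : IsShuffleContext M L x z v w) (ha : ∀ u ∈ L, a :: u ∈ K) :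
    IsShuffleContext M K (a :: x) z v (a :: w) where
  exists_interleaving := by
    obtain ⟨u, hu, rfl⟩ := h.exists_interleaving
    exact ⟨u, hu, rfl⟩
  append_mem v' hv' := ha _ (h.append_mem v' hv')

theorem mono (h : IsShuffleContext M L x z v w) (hLK : L ⊆ K) : IsShuffleContext M K x z v w where
  exists_interleaving := h.exists_interleaving
  append_mem v' hv' := hLK (h.append_mem v' hv')

theorem append_right {y : List α} (h : IsShuffleContext M L x z v w) (hy : y ∈ K) :
    IsShuffleContext M (Set.image2 (· ++ ·) L K) x (z ++ y) v (w ++ y) where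
  exists_interleaving := by
    obtain ⟨u, hu, rfl⟩ := h.exists_interleaving
    exact ⟨u ++ y, by simpa using hu.append (.nil_left y), by simp⟩
  append_mem v' hv' := ⟨_, h.append_mem v' hv', y, hy, by simp⟩

theorem append_left {y : List α} (h : IsShuffleContext M L x z v w) (hy : y ∈ K) :
    IsShuffleContext M (Set.image2 (· ++ ·) K L) (y ++ x) z v (y ++ w) where
  exists_interleaving := by
    obtain ⟨u, hu, rfl⟩ := h.exists_interleaving
    exact ⟨u, hu, by simp⟩
  append_mem v' hv' := ⟨y, hy, _, h.append_mem v' hv', by simp⟩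

theorem exists_shuffle {y w' : List α} (h : IsShuffleContext M L x z v w) (hy : y ∈ K)
    (hw' : IsInterleaving w y w') :
    ∃ x' z', IsShuffleContext M (shuffleLang L K) x' z' v w' := by
  obtain ⟨u, hu, rfl⟩ := h.exists_interleaving
  -- The new prefix is the part of `w'` read until `x` is exhausted.
  obtain ⟨y₁, y₂, x', u', rfl, rfl, hx', hu'⟩ := hw'.exists_of_append_left
  obtain ⟨z', hz', huz'⟩ := hu.exists_assoc hu'
  refine ⟨x', z', ⟨u', huz', rfl⟩, fun v' hv' => ⟨_, h.append_mem v' hv', y₁ ++ y₂, hy, ?_⟩⟩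
  simpa using hx'.append (hz'.append_left v')

theorem listPow_mem (h : IsShuffleContext M M x z v w) {y : List α} (hy : y ∈ M) (m : ℕ) :
    listPow x m ++ y ++ listPow z m ∈ M := by
  induction m with
  | zero => simpa [listPow] using hy
  | succ m ih =>
    rw [listPow_succ, listPow_succ']
    simpa using h.append_mem _ ih

end IsShuffleContext

/-- Finite ordered trees with nodes labelled in `V`, used as derivation trees. The terminal letters
are not recorded: every node stands for one production, hence for one letter. -/
inductive DerivationTree (V : Type*)
  | node (label : V) (children : List (DerivationTree V))

namespace DerivationTree

variable {V : Type*}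

/-- The nonterminal at the root. -/
def label : DerivationTree V → V
  | node X _ => X

/-- The immediate subtrees, from left to right. -/
def children : DerivationTree V → List (DerivationTree V)
  | node _ ts => ts

/-- The number of nodes. -/
def size : DerivationTree V → ℕ
  | node _ ts => (ts.map size).sum + 1

theorem size_eq (T : DerivationTree V) : T.size = (T.children.map size).sum + 1 := by
  cases T
  rw [size, children]

/-- `c` is an immediate subtree of `T`. -/
def IsChild (c T : DerivationTree V) : Prop := c ∈ T.children

/-- `U` is a subtree of `T`, possibly `T` itself. -/
abbrev IsSubtree : DerivationTree V → DerivationTree V → Prop := Relation.ReflTransGen IsChild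

/-- `U` is a subtree of `T` rooted strictly below the root of `T`. -/
abbrev IsProperSubtree : DerivationTree V → DerivationTree V → Prop := Relation.TransGen IsChild

theorem IsChild.size_lt {c T : DerivationTree V} (h : IsChild c T) : c.size < T.size := by
  rw [size_eq T, Nat.lt_succ_iff]
  exact List.le_sum_of_mem (List.mem_map_of_mem h)

theorem wellFounded_isChild : WellFounded (IsChild (V := V)) :=
  (measure size).wf.mono fun _ _ => IsChild.size_lt

/-- The root label reappears strictly below the root. -/
def IsRecursive (T : DerivationTree V) : Prop :=
  ∃ U, IsProperSubtree U T ∧ U.label = T.label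

theorem size_le_of_children_size_le {K B : ℕ} {T : DerivationTree V} (hK : T.children.length ≤ K)
    (hB : ∀ c, IsChild c T → c.size ≤ B) : T.size ≤ K * B + 1 := by
  have hsum : (T.children.map size).sum ≤ T.children.length * B := by
    simpa using List.sum_le_card_nsmul (T.children.map size) B
      (List.forall_mem_map.2 hB)
  rw [size_eq]
  gcongr
  exact hsum.trans (Nat.mul_le_mul_right B hK)

theorem size_le_of_forall_not_isRecursive {K : ℕ} (T : DerivationTree V)
    (A : Finset V) (hA : ∀ U, IsSubtree U T → U.label ∈ A)
    (hK : ∀ U, IsSubtree U T → U.children.length ≤ K)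
    (hT : ∀ U, IsSubtree U T → ¬ U.IsRecursive) :
    T.size ≤ ∑ i ∈ Finset.range A.card, K ^ i := by
  classical
  induction T using wellFounded_isChild.induction generalizing A with
  | _ T ih =>
    have hlabel : T.label ∈ A := hA T .refl
    rw [← Finset.card_erase_add_one hlabel, geom_sum_succ]
    refine size_le_of_children_size_le (hK T .refl) fun c hc => ih c hc (A.erase T.label) ?_
      (fun U hU => hK U (hU.tail hc)) (fun U hU => hT U (hU.tail hc))
    intro U hU
    have hne : U.label ≠ T.label := fun h => hT T .refl ⟨U, .tail' hU hc, h⟩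
    exact Finset.mem_erase.2 ⟨hne, hA U (hU.tail hc)⟩

theorem exists_isRecursive_size_le [Fintype V] {K : ℕ} {T : DerivationTree V}
    (hK : ∀ U, IsSubtree U T → U.children.length ≤ K)
    (hT : ∑ i ∈ Finset.range (Fintype.card V), K ^ i < T.size) :
    ∃ U, IsSubtree U T ∧ U.IsRecursive ∧
      U.size ≤ ∑ i ∈ Finset.range (Fintype.card V + 1), K ^ i := by
  have size_le {U : DerivationTree V} (hU : IsSubtree U T)
      (h : ∀ W, IsSubtree W U → ¬ W.IsRecursive) :
      U.size ≤ ∑ i ∈ Finset.range (Fintype.card V), K ^ i :=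
    size_le_of_forall_not_isRecursive U Finset.univ (fun _ _ => Finset.mem_univ _)
      (fun W hW => hK W (hW.trans hU)) h
  have hrec : ∃ U, IsSubtree U T ∧ U.IsRecursive := by
    by_contra! h
    exact hT.not_ge (size_le .refl h)
  obtain ⟨U, ⟨hUT, hU⟩, hmin⟩ := wellFounded_isChild.transGen.has_min
    {U | IsSubtree U T ∧ U.IsRecursive} hrec
  refine ⟨U, hUT, hU, ?_⟩
  rw [geom_sum_succ]
  refine size_le_of_children_size_le (hK U hUT) fun c hc => ?_
  have hcT : IsSubtree c T := hUT.head hc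
  exact size_le hcT fun W hW hWrec => hmin W ⟨hW.trans hcT, hWrec⟩ (.tail' hW hc)

/-- The language of all words yielded by a tree with root label `X`, for a given yield relation. -/
def yieldLang {α : Type} (Yields : DerivationTree V → List α → Prop) (X : V) : Set (List α) :=
  {w | ∃ T, T.label = X ∧ Yields T w}

theorem shufflePumping_yieldLang [Finite V] {α : Type} {K : ℕ}
    {Yields : DerivationTree V → List α → Prop}
    (size_eq : ∀ {T w}, Yields T w → T.size = w.length)
    (length_children_le : ∀ {T w}, Yields T w → T.children.length ≤ K)
    (exists_context : ∀ {U T w}, Yields T w → IsProperSubtree U T →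
      ∃ x z v, x ≠ [] ∧ Yields U v ∧
        IsShuffleContext (yieldLang Yields U.label) (yieldLang Yields T.label) x z v w)
    (X : V) : ShufflePumping (yieldLang Yields X) := by
  have := Fintype.ofFinite V
  refine ⟨∑ i ∈ Finset.range (Fintype.card V + 1), K ^ i, ?_⟩
  rintro w ⟨T, rfl, hT⟩ hlen
  have exists_context' {U} (hU : IsSubtree U T) : ∃ x z v, Yields U v ∧
      IsShuffleContext (yieldLang Yields U.label) (yieldLang Yields T.label) x z v w := by
    obtain rfl | hU := Relation.reflTransGen_iff_eq_or_transGen.1 hU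
    · exact ⟨[], [], w, hT, .refl _ _⟩
    · obtain ⟨x, z, v, -, h⟩ := exists_context hT hU
      exact ⟨x, z, v, h⟩
  have hchildren (U) (hU : IsSubtree U T) : U.children.length ≤ K := by
    obtain ⟨-, -, v, hv, -⟩ := exists_context' hU
    exact length_children_le hv
  have hsize : ∑ i ∈ Finset.range (Fintype.card V), K ^ i < T.size := by
    rw [size_eq hT]
    exact (Finset.sum_le_sum_of_subset (Finset.range_mono (Nat.le_succ _))).trans_lt hlen
  obtain ⟨U, hUT, ⟨U', hU'U, hlabel⟩, hUsize⟩ := exists_isRecursive_size_le hchildren hsize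
  obtain ⟨x, z, v, hv, outer⟩ := exists_context' hUT
  obtain ⟨s, t, y, hs, hy, inner⟩ := exists_context hv hU'U
  rw [hlabel] at inner
  obtain ⟨u, hu, rfl⟩ := outer.exists_interleaving
  obtain ⟨yt, hyt, rfl⟩ := inner.exists_interleaving
  refine ⟨x, y, z, s, t, ⟨yt, u, hyt, hu, rfl⟩, List.length_pos_iff.2 hs, ?_, fun m => ?_⟩
  · rwa [size_eq hv, List.length_append, hyt.length_eq, ← add_assoc, ← List.length_append,
      ← List.length_append] at hUsize
  · simpa using outer.append_mem _ (inner.listPow_mem ⟨U', hlabel, hy⟩ m)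

end DerivationTree

open DerivationTree

/-! ### Partially-commutative grammars -/

/-- `PCForestDerives G ts w`: the configuration of root labels of `ts` derives `w` by a derivation
in which each symbol is rewritten according to the tree it carries. -/
inductive PCForestDerives {α : Type} (G : PCGrammar α) :
    List (DerivationTree G.V) → List α → Prop
  | nil : PCForestDerives G [] []
  | prod {T : DerivationTree G.V} {a : α} {ts : List (DerivationTree G.V)} {w : List α} :
      (T.label, a, T.children.map label) ∈ G.prods →
      PCForestDerives G (T.children ++ ts) w → PCForestDerives G (T :: ts) (a :: w)
  | swap {rs ts : List (DerivationTree G.V)} {T U : DerivationTree G.V} {w : List α} :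
      G.indep T.label U.label → PCForestDerives G (rs ++ U :: T :: ts) w →
      PCForestDerives G (rs ++ T :: U :: ts) w

theorem PCDerives.append {α : Type} {G : PCGrammar α} {γ δ : List G.V} {v w : List α}
    (hv : PCDerives G γ v) (hw : PCDerives G δ w) : PCDerives G (γ ++ δ) (v ++ w) := by
  induction hv with
  | nil => exact hw
  | prod hp _ ih => exact .prod hp (by simpa using ih)
  | swap hi _ ih => simpa using PCDerives.swap hi (by simpa using ih)

theorem PCDerives.exists_forest {α : Type} {G : PCGrammar α} {γ : List G.V} {w : List α}
    (h : PCDerives G γ w) : ∃ ts, ts.map label = γ ∧ PCForestDerives G ts w := by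
  induction h with
  | nil => exact ⟨[], rfl, .nil⟩
  | @prod X _ _ _ _ hp _ ih =>
    obtain ⟨ts, hts, hw⟩ := ih
    obtain ⟨cs, rs, rfl, rfl, rfl⟩ := List.map_eq_append_iff.1 hts
    exact ⟨node X cs :: rs, rfl, .prod (T := node X cs) hp hw⟩
  | swap hi _ ih =>
    obtain ⟨ts, hts, hw⟩ := ih
    obtain ⟨rs, _, rfl, rfl, hUT⟩ := List.map_eq_append_iff.1 hts
    obtain ⟨U, _, rfl, rfl, hT⟩ := List.map_eq_cons_iff.1 hUT
    obtain ⟨T, ts, rfl, rfl, rfl⟩ := List.map_eq_cons_iff.1 hT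
    exact ⟨rs ++ T :: U :: ts, by simp, .swap hi hw⟩

namespace PCForestDerives

variable {α : Type} {G : PCGrammar α} {T U : DerivationTree G.V} {ts : List (DerivationTree G.V)}
  {w : List α}

theorem pcDerives (h : PCForestDerives G ts w) : PCDerives G (ts.map label) w := by
  induction h with
  | nil => exact .nil
  | prod hp _ ih =>
    rw [List.map_append] at ih
    exact .prod hp ih
  | swap hi _ ih =>
    rw [List.map_append] at ih ⊢
    exact .swap hi ih

theorem sum_size_eq (h : PCForestDerives G ts w) : (ts.map size).sum = w.length := by
  induction h with
  | nil => rfl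
  | @prod T _ _ _ _ _ ih =>
    rw [List.map_append, List.sum_append] at ih
    rw [List.map_cons, List.sum_cons, T.size_eq, List.length_cons, ← ih]
    omega
  | swap _ _ ih => rw [← ih, (((List.Perm.swap _ _ _).append_left _).map size).sum_eq]

theorem exists_of_isInterleaving {ts₁ ts₂ : List (DerivationTree G.V)}
    (h : PCForestDerives G ts w) (hts : IsInterleaving ts₁ ts₂ ts) :
    ∃ w₁ w₂, PCForestDerives G ts₁ w₁ ∧ PCForestDerives G ts₂ w₂ ∧ IsInterleaving w₁ w₂ w := by
  induction h generalizing ts₁ ts₂ with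
  | nil => cases hts; exact ⟨[], [], .nil, .nil, .nil⟩
  | prod hp _ ih =>
    cases hts with
    | left hts =>
      obtain ⟨w₁, w₂, h₁, h₂, hw⟩ := ih (hts.append_left _)
      exact ⟨_, w₂, .prod hp h₁, h₂, .left hw⟩
    | right hts =>
      obtain ⟨w₁, w₂, h₁, h₂, hw⟩ := ih (hts.append_right _)
      exact ⟨w₁, _, h₁, .prod hp h₂, .right hw⟩
  | swap hi _ ih =>
    obtain ⟨rs₁, us₁, rs₂, us₂, rfl, rfl, hrs, hus⟩ := hts.exists_of_append_result
    -- The swap survives in a part exactly when both swapped symbols go to that part.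
    rcases hus with _ | (_ | hus | hus) | (_ | hus | hus)
    · obtain ⟨w₁, w₂, h₁, h₂, hw⟩ := ih (hrs.append hus.left.left)
      exact ⟨w₁, w₂, .swap hi h₁, h₂, hw⟩
    · exact ih (hrs.append hus.left.right)
    · exact ih (hrs.append hus.right.left)
    · obtain ⟨w₁, w₂, h₁, h₂, hw⟩ := ih (hrs.append hus.right.right)
      exact ⟨w₁, w₂, h₁, .swap hi h₂, hw⟩

theorem exists_prod_of_singleton (h : PCForestDerives G [T] w) :
    ∃ a v, w = a :: v ∧ (T.label, a, T.children.map label) ∈ G.prods ∧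
      PCForestDerives G T.children v := by
  generalize hts : [T] = ts at h
  cases h with
  | nil => simp at hts
  | prod hp h =>
    obtain ⟨rfl, rfl⟩ := List.cons_eq_cons.1 hts
    exact ⟨_, _, rfl, hp, by simpa using h⟩
  | swap =>
    have := congrArg List.length hts
    simp only [List.length_append, List.length_cons, List.length_nil] at this
    omega

theorem exists_context_of_mem (h : PCForestDerives G ts w) (hT : T ∈ ts) (hU : IsSubtree U T) :
    ∃ x z v, PCForestDerives G [U] v ∧
      IsShuffleContext {v | PCDerives G [U.label] v} {w | PCDerives G (ts.map label) w}
        x z v w := by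
  induction h generalizing T with
  | nil => simp at hT
  | @prod R a ts w hp hd ih =>
    have of_mem {T} (hT : T ∈ R.children ++ ts) (hU : IsSubtree U T) :
        ∃ x z v, PCForestDerives G [U] v ∧ IsShuffleContext {v | PCDerives G [U.label] v}
          {w | PCDerives G ((R :: ts).map label) w} x z v (a :: w) := by
      obtain ⟨x, z, v, hv, hctx⟩ := ih hT hU
      exact ⟨a :: x, z, v, hv, hctx.cons fun u hu => .prod hp (by simpa using hu)⟩
    rcases List.mem_cons.1 hT with rfl | hT
    · rcases hU.cases_tail with rfl | ⟨c, hUc, hc⟩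
      · obtain ⟨v, z, hv, hz, hw⟩ :=
          (prod hp hd).exists_of_isInterleaving (.left (.nil_left ts) : IsInterleaving [T] ts _)
        exact ⟨[], z, v, hv, ⟨_, hw, rfl⟩, fun v' hv' => hv'.append hz.pcDerives⟩
      · exact of_mem (List.mem_append_left _ hc) hUc
    · exact of_mem (List.mem_append_right _ hT) hU
  | swap hi _ ih =>
    obtain ⟨x, z, v, hv, hctx⟩ :=
      ih (((List.Perm.swap _ _ _).append_left _).mem_iff.1 hT) hU
    refine ⟨x, z, v, hv, hctx.mono fun u hu => ?_⟩
    simpa using PCDerives.swap hi (by simpa using hu)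

end PCForestDerives

theorem PCGrammar.yieldLang_eq {α : Type} (G : PCGrammar α) (X : G.V) :
    yieldLang (fun T w => PCForestDerives G [T] w) X = {w | PCDerives G [X] w} := by
  ext w
  constructor
  · rintro ⟨T, rfl, h⟩
    exact h.pcDerives
  · intro h
    obtain ⟨ts, hts, hw⟩ := h.exists_forest
    obtain ⟨T, rfl, hT⟩ := List.map_eq_singleton_iff.1 hts
    exact ⟨T, hT, hw⟩

theorem PCGrammar.shufflePumping_lang {α : Type} (G : PCGrammar α) : ShufflePumping G.lang := by
  have := G.finV
  obtain ⟨K, hK⟩ := (G.finP.image fun p => p.2.2.length).bddAbove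
  rw [PCGrammar.lang, ← G.yieldLang_eq]
  refine shufflePumping_yieldLang (K := K) (fun h => by simpa using h.sum_size_eq)
    (fun {T w} h => ?_) (fun {U T w} h hU => ?_) G.start
  · obtain ⟨a, v, -, hp, -⟩ := h.exists_prod_of_singleton
    simpa using hK (Set.mem_image_of_mem _ hp)
  · obtain ⟨a, w, rfl, hp, hw⟩ := h.exists_prod_of_singleton
    obtain ⟨c, hUc, hc⟩ := Relation.TransGen.tail'_iff.1 hU
    obtain ⟨x, z, v, hv, hctx⟩ := hw.exists_context_of_mem hc hUc
    simp only [G.yieldLang_eq]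
    exact ⟨a :: x, z, v, List.cons_ne_nil _ _, hv,
      hctx.cons fun u hu => .prod hp (by simpa using hu)⟩

/-! ### Shuffle grammars -/

/-- The number of occurrences of nonterminals in a term. -/
def PATerm.numVars {V : Type} : PATerm V → ℕ
  | eps => 0
  | var _ => 1
  | seq t u => t.numVars + u.numVars
  | par t u => t.numVars + u.numVars

/-- `PAForestDerives P t ts w`: a compositional counterpart of `PAGen P t w`, in which `ts` lists
the derivation trees of the nonterminal occurrences in `t` from left to right. -/
inductive PAForestDerives {V α : Type} (P : Set (V × α × PATerm V)) :
    PATerm V → List (DerivationTree V) → List α → Prop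
  | eps : PAForestDerives P .eps [] []
  | var {X : V} {a : α} {t : PATerm V} {ts : List (DerivationTree V)} {w : List α} :
      (X, a, t) ∈ P → PAForestDerives P t ts w → PAForestDerives P (.var X) [node X ts] (a :: w)
  | seq {t u : PATerm V} {ts us : List (DerivationTree V)} {v w : List α} :
      PAForestDerives P t ts v → PAForestDerives P u us w →
      PAForestDerives P (t.seq u) (ts ++ us) (v ++ w)
  | par {t u : PATerm V} {ts us : List (DerivationTree V)} {v w x : List α} :
      PAForestDerives P t ts v → PAForestDerives P u us w → IsInterleaving v w x →
      PAForestDerives P (t.par u) (ts ++ us) x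

/-- The language denoted by a term: the words that it derives compositionally. -/
def paLang {V α : Type} (P : Set (V × α × PATerm V)) (t : PATerm V) : Set (List α) :=
  {w | ∃ ts, PAForestDerives P t ts w}

section PA

variable {V α : Type} {P : Set (V × α × PATerm V)} {t u : PATerm V} {a : α} {v w : List α}

theorem paLang_eps : paLang P .eps = {[]} := by
  ext w
  constructor
  · rintro ⟨_, _ | _⟩
    rfl
  · rintro rfl
    exact ⟨[], .eps⟩

theorem paLang_seq : paLang P (t.seq u) = Set.image2 (· ++ ·) (paLang P t) (paLang P u) := by
  ext w
  constructor
  · rintro ⟨_, _ | _ | ⟨hv, hw⟩⟩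
    exact ⟨_, ⟨_, hv⟩, _, ⟨_, hw⟩, rfl⟩
  · rintro ⟨_, ⟨_, hv⟩, _, ⟨_, hw⟩, rfl⟩
    exact ⟨_, .seq hv hw⟩

theorem paLang_par : paLang P (t.par u) = shuffleLang (paLang P t) (paLang P u) := by
  ext w
  constructor
  · rintro ⟨_, _ | _ | _ | ⟨hv, hw, h⟩⟩
    exact ⟨_, ⟨_, hv⟩, _, ⟨_, hw⟩, h⟩
  · rintro ⟨_, ⟨_, hv⟩, _, ⟨_, hw⟩, h⟩
    exact ⟨_, .par hv hw h⟩

theorem cons_mem_paLang_var {X : V} (hp : (X, a, t) ∈ P) (hw : w ∈ paLang P t) :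
    a :: w ∈ paLang P (.var X) := by
  obtain ⟨ts, hw⟩ := hw
  exact ⟨_, .var hp hw⟩

theorem PAEq.paLang_eq (h : PAEq t u) : paLang P t = paLang P u := by
  induction h with
  | refl => rfl
  | symm _ ih => exact ih.symm
  | trans _ _ ih₁ ih₂ => exact ih₁.trans ih₂
  | seq_assoc => simp only [paLang_seq, Set.image2_assoc List.append_assoc]
  | par_assoc => simp only [paLang_par, shuffleLang_assoc]
  | par_comm => simp only [paLang_par, shuffleLang_comm]
  | seq_eps_left => simp [paLang_seq, paLang_eps]
  | seq_eps_right => simp [paLang_seq, paLang_eps]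
  | par_eps => rw [paLang_par, paLang_eps, shuffleLang_singleton_nil]
  | seq_congr _ _ ih₁ ih₂ => rw [paLang_seq, paLang_seq, ih₁, ih₂]
  | par_congr _ _ ih₁ ih₂ => rw [paLang_par, paLang_par, ih₁, ih₂]

theorem PAStep.cons_mem_paLang (h : PAStep P t a u) (hw : w ∈ paLang P u) :
    a :: w ∈ paLang P t := by
  induction h generalizing w with
  | prod hp => exact cons_mem_paLang_var hp hw
  | seq_left _ ih =>
    rw [paLang_seq] at hw ⊢
    obtain ⟨x, hx, y, hy, rfl⟩ := hw
    exact ⟨_ :: x, ih hx, y, hy, rfl⟩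
  | par_left _ ih =>
    rw [paLang_par] at hw ⊢
    obtain ⟨x, hx, y, hy, h⟩ := hw
    exact ⟨_ :: x, ih hx, y, hy, .left h⟩
  | par_right _ ih =>
    rw [paLang_par] at hw ⊢
    obtain ⟨x, hx, y, hy, h⟩ := hw
    exact ⟨x, hx, _ :: y, ih hy, .right h⟩

namespace PAGen

theorem mem_paLang (h : PAGen P t w) : w ∈ paLang P t := by
  induction h with
  | done => exact ⟨[], .eps⟩
  | eqv he _ ih => rwa [he.paLang_eq]
  | step hs _ ih => exact hs.cons_mem_paLang ih

theorem paEq_eps_of_nil (h : PAGen P t []) : PAEq t .eps := by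
  generalize hw : ([] : List α) = w at h
  induction h with
  | done => exact .refl _
  | eqv he _ ih => exact he.trans (ih hw)
  | step => simp at hw

theorem exists_step_of_cons (h : PAGen P t (a :: w)) :
    ∃ t₁ t₂, PAEq t t₁ ∧ PAStep P t₁ a t₂ ∧ PAGen P t₂ w := by
  generalize hv : a :: w = v at h
  induction h with
  | done => simp at hv
  | eqv he _ ih =>
    obtain ⟨t₁, t₂, he', hs, hw⟩ := ih hv
    exact ⟨t₁, t₂, he.trans he', hs, hw⟩
  | step hs h =>
    obtain ⟨rfl, rfl⟩ := List.cons_eq_cons.1 hv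
    exact ⟨_, _, .refl _, hs, h⟩

theorem seq (hv : PAGen P t v) (hw : PAGen P u w) : PAGen P (t.seq u) (v ++ w) := by
  induction hv with
  | done => exact .eqv (.seq_eps_left _) hw
  | eqv he _ ih => exact .eqv (.seq_congr he (.refl _)) ih
  | step hs _ ih => exact .step (.seq_left hs) ih

theorem par {x : List α} (hv : PAGen P t v) (hw : PAGen P u w) (hx : IsInterleaving v w x) :
    PAGen P (t.par u) x := by
  induction hx generalizing t u with
  | nil =>
    have he : PAEq (t.par u) .eps :=
      (PAEq.par_congr hv.paEq_eps_of_nil hw.paEq_eps_of_nil).trans (.par_eps _)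
    exact .eqv he .done
  | left _ ih =>
    obtain ⟨t₁, t₂, he, hs, hv⟩ := hv.exists_step_of_cons
    exact .eqv (.par_congr he (.refl _)) (.step (.par_left hs) (ih hv hw))
  | right _ ih =>
    obtain ⟨u₁, u₂, he, hs, hw⟩ := hw.exists_step_of_cons
    exact .eqv (.par_congr (.refl _) he) (.step (.par_right hs) (ih hv hw))

end PAGen

namespace PAForestDerives

variable {ts : List (DerivationTree V)} {T U : DerivationTree V}

theorem paGen (h : PAForestDerives P t ts w) : PAGen P t w := by
  induction h with
  | eps => exact .done
  | var hp _ ih => exact .step (.prod hp) ih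
  | seq _ _ ih₁ ih₂ => exact ih₁.seq ih₂
  | par _ _ hx ih₁ ih₂ => exact ih₁.par ih₂ hx

theorem length_eq (h : PAForestDerives P t ts w) : ts.length = t.numVars := by
  induction h with
  | eps | var => rfl
  | seq _ _ ih₁ ih₂ | par _ _ _ ih₁ ih₂ => rw [List.length_append, ih₁, ih₂, PATerm.numVars]

theorem sum_size_eq (h : PAForestDerives P t ts w) : (ts.map size).sum = w.length := by
  induction h with
  | eps => rfl
  | var _ _ ih => simp [size, ih]
  | seq _ _ ih₁ ih₂ => simp [ih₁, ih₂]
  | par _ _ hx ih₁ ih₂ => simp [ih₁, ih₂, hx.length_eq]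

theorem exists_prod_of_var (h : PAForestDerives P (.var T.label) [T] w) :
    ∃ a r v, w = a :: v ∧ (T.label, a, r) ∈ P ∧ PAForestDerives P r T.children v := by
  obtain ⟨X, cs⟩ := T
  cases h with
  | var hp h => exact ⟨_, _, _, rfl, hp, h⟩

theorem exists_context_of_mem (h : PAForestDerives P t ts w) (hT : T ∈ ts) (hU : IsSubtree U T) :
    ∃ x z v, PAForestDerives P (.var U.label) [U] v ∧
      IsShuffleContext (paLang P (.var U.label)) (paLang P t) x z v w := by
  induction h generalizing T with
  | eps => simp at hT
  | var hp h ih =>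
    obtain rfl := List.mem_singleton.1 hT
    rcases hU.cases_tail with rfl | ⟨c, hUc, hc⟩
    · exact ⟨[], [], _, .var hp h, .refl _ _⟩
    · obtain ⟨x, z, v, hv, hctx⟩ := ih hc hUc
      exact ⟨_, z, v, hv, hctx.cons fun _ => cons_mem_paLang_var hp⟩
  | seq h₁ h₂ ih₁ ih₂ =>
    rw [paLang_seq]
    rcases List.mem_append.1 hT with hT | hT
    · obtain ⟨x, z, v, hv, hctx⟩ := ih₁ hT hU
      exact ⟨x, _, v, hv, hctx.append_right ⟨_, h₂⟩⟩
    · obtain ⟨x, z, v, hv, hctx⟩ := ih₂ hT hU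
      exact ⟨_, z, v, hv, hctx.append_left ⟨_, h₁⟩⟩
  | par h₁ h₂ hx ih₁ ih₂ =>
    rw [paLang_par]
    rcases List.mem_append.1 hT with hT | hT
    · obtain ⟨x, z, v, hv, hctx⟩ := ih₁ hT hU
      obtain ⟨x', z', hctx'⟩ := hctx.exists_shuffle (K := paLang P _) ⟨_, h₂⟩ hx
      exact ⟨x', z', v, hv, hctx'⟩
    · obtain ⟨x, z, v, hv, hctx⟩ := ih₂ hT hU
      rw [shuffleLang_comm]
      obtain ⟨x', z', hctx'⟩ := hctx.exists_shuffle (K := paLang P _) ⟨_, h₁⟩ hx.symm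
      exact ⟨x', z', v, hv, hctx'⟩

end PAForestDerives

theorem mem_paLang_iff : w ∈ paLang P t ↔ PAGen P t w :=
  ⟨fun ⟨_, h⟩ => h.paGen, PAGen.mem_paLang⟩

theorem yieldLang_eq_paLang (X : V) :
    yieldLang (fun T w => PAForestDerives P (.var T.label) [T] w) X = paLang P (.var X) := by
  ext w
  constructor
  · rintro ⟨T, rfl, h⟩
    exact ⟨_, h⟩
  · rintro ⟨_, _ | ⟨hp, h⟩⟩
    exact ⟨node X _, rfl, .var hp h⟩

end PA

theorem PAGrammar.lang_eq_paLang {α : Type} (G : PAGrammar α) :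
    G.lang = paLang G.prods (.var G.start) :=
  Set.ext fun _ => mem_paLang_iff.symm

theorem PAGrammar.shufflePumping_lang {α : Type} (G : PAGrammar α) : ShufflePumping G.lang := by
  have := G.finV
  obtain ⟨K, hK⟩ := (G.finP.image fun p => p.2.2.numVars).bddAbove
  rw [G.lang_eq_paLang, ← yieldLang_eq_paLang]
  refine shufflePumping_yieldLang (K := K) (fun h => by simpa using h.sum_size_eq)
    (fun {T w} h => ?_) (fun {U T w} h hU => ?_) G.start
  · obtain ⟨a, r, v, -, hp, hv⟩ := h.exists_prod_of_var
    rw [hv.length_eq]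
    exact hK (Set.mem_image_of_mem _ hp)
  · obtain ⟨a, r, w, rfl, hp, hw⟩ := h.exists_prod_of_var
    obtain ⟨c, hUc, hc⟩ := Relation.TransGen.tail'_iff.1 hU
    obtain ⟨x, z, v, hv, hctx⟩ := hw.exists_context_of_mem hc hUc
    simp only [yieldLang_eq_paLang]
    exact ⟨a :: x, z, v, List.cons_ne_nil _ _, hv, hctx.cons fun _ => cons_mem_paLang_var hp⟩

theorem shuffle_pumping_of_pccfl_or_shufflecfl_general {α : Type}
    {L : Set (List α)} (hL : IsPCCFL L ∨ IsShuffleCFL L) : ShufflePumping L := by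
  rcases hL with ⟨G, rfl⟩ | ⟨G, rfl⟩
  · exact G.shufflePumping_lang
  · exact G.shufflePumping_lang

/-- every language in PCCFL ∪ shuffleCFL satisfies shuffle pumping. -/
theorem shuffle_pumping_of_pccfl_or_shufflecfl (α : Type) [Finite α]
    (L : Set (List α)) (hL : IsPCCFL L ∨ IsShuffleCFL L) :
    ShufflePumping L :=
  shuffle_pumping_of_pccfl_or_shufflecfl_general hL
end

section
/- For three pairwise distinct letters a, b, c, the language L = {a^n b^n c^n : n ≥ 1} does not satisfy the shuffle-pumping condition: for every constant N there exists a word w ∈ L with |w| > N such that no words x, y, z, s, t satisfy simultaneously (1) w ∈ x·((s·(y || t)) || z), (2) 1 ≤ |s| and |s·y·t| ≤ N, and (3) x·s^m·y·t^m·z ∈ L for all m ≥ 0. -/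
/-!
For distinct letters `a₁, …, aₖ`, suppose that all words `x sᵐ y tᵐ z` have the form `a₁ⁿ ⋯ aₖⁿ`,
where `s t` is not empty. All letters occur equally often in `x y z`, and also in `x s y t z`, so
every `aᵢ` occurs in `s` or in `t`. On the other hand, `s s` and `t t` are subwords of
`x s² y t² z`, where the letters appear in the order `a₁, …, aₖ`, so each of `s` and `t` uses at
most one letter. Hence `k ≤ 2`.
-/

section BlockWord

variable {β : Type*} {l d s : List β} {n k : ℕ}

/-- The word `a₁ⁿ a₂ⁿ ⋯ aₖⁿ` over the list of letters `l = [a₁, …, aₖ]`, generalizing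
`aⁿ bⁿ cⁿ`, which is the case `l = [a, b, c]`. -/
def blockWord (l : List β) (n : ℕ) : List β :=
  l.flatMap (List.replicate n)

theorem mem_of_mem_blockWord {p : β} (hp : p ∈ blockWord l n) : p ∈ l := by
  obtain ⟨q, hq, hpq⟩ := List.mem_flatMap.1 hp
  exact List.eq_of_mem_replicate hpq ▸ hq

theorem count_blockWord [DecidableEq β] (l : List β) (n : ℕ) (p : β) :
    (blockWord l n).count p = n * l.count p := by
  induction l with
  | nil => rfl
  | cons q l ih =>
    rw [blockWord] at ih ⊢
    rw [List.flatMap_cons, List.count_append, ih, List.count_replicate, List.count_cons]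
    split_ifs <;> ring

theorem subset_of_blockWord_perm_append (h : (blockWord l n).Perm (blockWord l k ++ d))
    (hd : d ≠ []) : l ⊆ d := by
  classical
  have count_eq (p : β) : n * l.count p = k * l.count p + d.count p := by
    simpa only [List.count_append, count_blockWord] using h.count_eq p
  have hkn : k < n := by
    obtain ⟨q, hq⟩ := List.exists_mem_of_ne_nil d hd
    refine lt_of_mul_lt_mul_right (a := l.count q) ?_ (Nat.zero_le _)
    exact count_eq q ▸ Nat.lt_add_of_pos_right (List.count_pos_iff.2 hq)
  intro p hp
  have hlt : k * l.count p < n * l.count p :=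
    Nat.mul_lt_mul_of_pos_right hkn (List.count_pos_iff.2 hp)
  exact List.count_pos_iff.1 (by have := count_eq p; omega)

theorem pairwise_idxOf_le_blockWord [DecidableEq β] (hl : l.Nodup) (n : ℕ) :
    (blockWord l n).Pairwise (fun p q => l.idxOf p ≤ l.idxOf q) := by
  refine List.pairwise_flatMap.2 ⟨fun p _ => List.pairwise_replicate.2 (Or.inr le_rfl), ?_⟩
  refine List.pairwise_iff_getElem.2 fun i j hi hj hij p hp q hq => ?_
  rw [List.eq_of_mem_replicate hp, List.eq_of_mem_replicate hq, hl.idxOf_getElem,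
    hl.idxOf_getElem]
  exact hij.le

theorem card_toFinset_le_one_of_append_self_sublist_blockWord [DecidableEq β] (hl : l.Nodup)
    (h : (s ++ s).Sublist (blockWord l n)) : s.toFinset.card ≤ 1 := by
  have idxOf_le : ∀ p ∈ s, ∀ q ∈ s, l.idxOf p ≤ l.idxOf q :=
    (List.pairwise_append.1 ((pairwise_idxOf_le_blockWord hl n).sublist h)).2.2
  refine Finset.card_le_one.2 fun p hp q hq => ?_
  rw [List.mem_toFinset] at hp hq
  have hpl : p ∈ l := mem_of_mem_blockWord (h.subset (List.mem_append_left s hp))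
  exact (List.idxOf_inj hpl).1 (le_antisymm (idxOf_le p hp q hq) (idxOf_le q hq p hp))

end BlockWord

theorem anbncn_no_shuffle_pumping_general {α : Type} {l : List α} (hl : l.Nodup)
    (hlen : 2 < l.length) (x y z : List α) {s t : List α} (hst : s ++ t ≠ []) :
    ∃ m : ℕ, x ++ listPow s m ++ y ++ listPow t m ++ z ∉ Set.range (blockWord l) := by
  classical
  by_contra! hpump
  obtain ⟨n₀, h₀⟩ := hpump 0
  obtain ⟨n₁, h₁⟩ := hpump 1
  obtain ⟨n₂, h₂⟩ := hpump 2
  simp only [listPow, List.replicate, List.flatten_cons, List.flatten_nil, List.append_nil]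
    at h₀ h₁ h₂
  have hsub : l ⊆ s ++ t := by
    refine subset_of_blockWord_perm_append (n := n₁) (k := n₀) ?_ hst
    rw [h₀, h₁, List.perm_iff_count]
    intro p
    simp only [List.count_append]
    ring
  have hs : (s ++ s).Sublist (blockWord l n₂) :=
    List.IsInfix.sublist ⟨x, y ++ (t ++ t) ++ z, by simp only [h₂, List.append_assoc]⟩
  have ht : (t ++ t).Sublist (blockWord l n₂) :=
    List.IsInfix.sublist ⟨x ++ (s ++ s) ++ y, z, h₂.symm⟩
  refine hlen.not_ge ?_
  calc l.length = l.toFinset.card := (List.toFinset_card_of_nodup hl).symm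
    _ ≤ (s ++ t).toFinset.card :=
      Finset.card_le_card fun p hp => List.mem_toFinset.2 (hsub (List.mem_toFinset.1 hp))
    _ = (s.toFinset ∪ t.toFinset).card := by rw [List.toFinset_append]
    _ ≤ s.toFinset.card + t.toFinset.card := Finset.card_union_le _ _
    _ ≤ 2 := Nat.add_le_add (card_toFinset_le_one_of_append_self_sublist_blockWord hl hs)
      (card_toFinset_le_one_of_append_self_sublist_blockWord hl ht)

/-- `{aⁿbⁿcⁿ : n ≥ 1}` does not satisfy the shuffle-pumping condition. -/
theorem anbncn_no_shuffle_pumping (α : Type) (a b c : α)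
    (hab : a ≠ b) (hac : a ≠ c) (hbc : b ≠ c)
    (L : Set (List α))
    (hL : L = {w | ∃ n : ℕ, 1 ≤ n ∧
        w = List.replicate n a ++ List.replicate n b ++ List.replicate n c}) :
    ∀ N : ℕ, ∃ w ∈ L, w.length > N ∧
      ∀ x y z s t : List α,
        ¬ ((∃ yt u : List α, IsInterleaving y t yt ∧ IsInterleaving (s ++ yt) z u ∧ w = x ++ u) ∧
           1 ≤ s.length ∧ (s ++ y ++ t).length ≤ N ∧
           ∀ m : ℕ, x ++ listPow s m ++ y ++ listPow t m ++ z ∈ L) := by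
  subst hL
  intro N
  refine ⟨_, ⟨N + 1, Nat.le_add_left 1 N, rfl⟩, ?_, ?_⟩
  · simp only [List.length_append, List.length_replicate]
    omega
  rintro x y z s t ⟨-, hs, -, hpump⟩
  have hnodup : [a, b, c].Nodup := by simp [hab, hac, hbc]
  have hst : s ++ t ≠ [] := List.append_ne_nil_of_left_ne_nil (List.ne_nil_of_length_pos hs) t
  obtain ⟨m, hm⟩ := anbncn_no_shuffle_pumping_general hnodup (by simp) x y z hst
  obtain ⟨n, -, hn⟩ := hpump m
  exact hm ⟨n, by rw [hn]; simp [blockWord]⟩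
end

section
/- trPCCFL is a strict subclass of PCCFL: every language in trPCCFL belongs to PCCFL, and there exists a language in PCCFL that does not belong to trPCCFL. -/
/-!
The witness is the language of the grammar with productions `T → aSBCE`, `S → aSBC | aBC`,
`B → b`, `C → c`, `E → e` in which only `B` and `C` are independent: its words have equally many
`a`, `b` and `c`, end with their only `e`, and include `aⁿbⁿcⁿe`.

Suppose a grammar with transitive dependence generated it. If a symbol of a reachable configuration
were independent of everything to its right, it could be moved to the end, and the final `e` would
be produced both by this symbol and by what it jumped over; but `e` occurs only once. Hence every
symbol but the last depends on one to its right, and by transitivity all symbols of the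
configuration are dependent. Swaps therefore never happen and the grammar is context-free. In a
context-free grammar, any two words derived from a nonterminal fit into the same contexts, so they
have the same differences between the numbers of `a`, `b` and `c`; as there are finitely many
nonterminals, these differences are bounded. But `aⁿbⁿcⁿe` contains such words of intermediate
length: long compared with this bound, yet too short to meet both `a` and `c`.
-/

theorem isInfix_append_or_of_length_le {α : Type*} {u x y z : List α} (h : u <:+: x ++ (y ++ z))
    (hu : u.length ≤ y.length) : u <:+: x ++ y ∨ u <:+: y ++ z := by
  obtain ⟨p, q, hpq⟩ := h
  have hlen := congrArg List.length hpq
  simp only [List.length_append] at hlen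
  rcases le_total p.length x.length with hp | hp
  · have hpu : p ++ u <+: x ++ y :=
      List.prefix_of_prefix_length_le ⟨q, hpq⟩ ⟨z, List.append_assoc x y z⟩ (by simp; omega)
    exact .inl ((List.suffix_append p u).isInfix.trans hpu.isInfix)
  · have huq : u ++ q <:+ y ++ z :=
      List.suffix_of_suffix_length_le ⟨p, by simpa using hpq⟩ (List.suffix_append x _)
        (by simp; omega)
    exact .inr ((List.prefix_append u q).isInfix.trans huq.isInfix)

/-- Every word of `L` ends with the letter `e`, which occurs nowhere else in it. -/
def IsEndMarked {α : Type*} (e : α) (L : Set (List α)) : Prop :=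
  ∀ w ∈ L, ∃ v, e ∉ v ∧ w = v ++ [e]

theorem IsEndMarked.notMem_left_and_mem_right {α : Type*} {e : α} {L : Set (List α)}
    (hL : IsEndMarked e L) {x y : List α} (hxy : x ++ y ∈ L) (hy : y ≠ []) : e ∉ x ∧ e ∈ y := by
  obtain ⟨s, hs, heq⟩ := hL _ hxy
  obtain ⟨y, b, rfl⟩ := (List.eq_nil_or_concat' y).resolve_left hy
  rw [← List.append_assoc] at heq
  obtain ⟨rfl, hb⟩ := List.append_inj' heq rfl
  obtain rfl := List.singleton_inj.1 hb
  exact ⟨fun hx => hs (List.mem_append_left _ hx), by simp⟩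

/-! ### Derivations of partially commutative grammars -/

namespace PCDerives

variable {α : Type} {G : PCGrammar α} {γ δ : List G.V} {u v w : List α}

theorem append_s4 (hu : PCDerives G γ u) (hv : PCDerives G δ v) :
    PCDerives G (γ ++ δ) (u ++ v) := by
  induction hu with
  | nil => exact hv
  | prod hp _ ih => exact .prod hp (by simpa using ih)
  | swap hi _ ih => simpa using PCDerives.swap hi (by simpa using ih)

theorem replicate_append {X : G.V} {a : α} (hp : (X, a, []) ∈ G.prods) (h : PCDerives G γ w)
    (n : ℕ) : PCDerives G (List.replicate n X ++ γ) (List.replicate n a ++ w) := by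
  induction n with
  | zero => exact h
  | succ n ih => exact .prod hp ih

theorem move_left {X : G.V} {β : List G.V} (ζ η : List G.V) (hX : ∀ Y ∈ ζ, G.indep X Y)
    (h : PCDerives G (η ++ (ζ ++ X :: β)) w) : PCDerives G (η ++ X :: (ζ ++ β)) w := by
  induction ζ generalizing η with
  | nil => exact h
  | cons Y ζ ih =>
    have hY : PCDerives G ((η ++ [Y]) ++ X :: (ζ ++ β)) w :=
      ih (η ++ [Y]) (fun Z hZ => hX Z (by simp [hZ])) (by simpa using h)
    exact .swap (hX Y (by simp)) (by simpa using hY)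

theorem ne_nil (h : PCDerives G γ w) (hγ : γ ≠ []) : w ≠ [] := by
  induction h with
  | nil => exact absurd rfl hγ
  | prod => simp
  | swap _ _ ih => exact ih (by simp)

theorem eq_nil (h : PCDerives G [] w) : w = [] := by
  generalize hγ : ([] : List G.V) = γ at h
  cases h <;> simp at hγ ⊢

theorem exists_of_forall_mem (γ : List G.V) (h : ∀ X ∈ γ, ∃ u, PCDerives G [X] u) :
    ∃ u, PCDerives G γ u := by
  induction γ with
  | nil => exact ⟨[], .nil⟩
  | cons X γ ih =>
    obtain ⟨u, hu⟩ := h X (by simp)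
    obtain ⟨v, hv⟩ := ih fun Y hY => h Y (by simp [hY])
    exact ⟨u ++ v, hu.append_s4 hv⟩

theorem exists_of_mem (h : PCDerives G γ w) : ∀ X ∈ γ, ∃ u, PCDerives G [X] u := by
  induction h with
  | nil => simp
  | @prod X a γ β _ hp _ ih =>
    intro Y hY
    rcases List.mem_cons.1 hY with rfl | hY
    · obtain ⟨u, hu⟩ := exists_of_forall_mem γ fun Z hZ => ih Z (by simp [hZ])
      exact ⟨a :: u, .prod hp (by simpa using hu)⟩
    · exact ih Y (by simp [hY])
  | @swap η β X Y _ _ _ ih =>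
    exact fun Z hZ => ih Z ((((List.Perm.swap X Y β).append_left η).mem_iff).2 hZ)

theorem exists_of_subset (h : PCDerives G γ w) (hδ : δ ⊆ γ) : ∃ u, PCDerives G δ u :=
  exists_of_forall_mem δ fun X hX => h.exists_of_mem X (hδ hX)

theorem sum_map_eq {A : Type*} [AddCommMonoid A] (f : α → A) (g : G.V → A)
    (hfg : ∀ p ∈ G.prods, f p.2.1 + (p.2.2.map g).sum = g p.1) (h : PCDerives G γ w) :
    (w.map f).sum = (γ.map g).sum := by
  induction h with
  | nil => rfl
  | prod hp _ ih => simp [ih, ← hfg _ hp, add_assoc]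
  | swap _ _ ih => simp [ih, add_left_comm]

theorem exists_of_singleton {X : G.V} (h : PCDerives G [X] w) :
    ∃ a γ u, w = a :: u ∧ (X, a, γ) ∈ G.prods ∧ PCDerives G γ u := by
  generalize hδ : [X] = δ at h
  cases h with
  | nil => simp at hδ
  | @prod Y a γ β u hp hd =>
    obtain ⟨rfl, rfl⟩ := List.cons_eq_cons.1 hδ
    exact ⟨a, γ, u, rfl, hp, by simpa using hd⟩
  | @swap η β =>
    have hlen := congrArg List.length hδ
    simp only [List.length_append, List.length_cons, List.length_nil] at hlen
    omega

theorem exists_of_append_singleton {X : G.V} (hX : ∀ Y, ¬ G.indep Y X)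
    (h : PCDerives G (γ ++ [X]) w) :
    ∃ u v, w = u ++ v ∧ PCDerives G γ u ∧ PCDerives G [X] v := by
  generalize hδ : γ ++ [X] = δ at h
  induction h generalizing γ with
  | nil => simp at hδ
  | @prod Y a ρ β w hp hd ih =>
    rcases γ with _ | ⟨Z, γ⟩
    · rw [List.nil_append] at hδ
      exact ⟨[], a :: w, rfl, .nil, hδ ▸ .prod hp hd⟩
    · obtain ⟨rfl, rfl⟩ := List.cons_eq_cons.1 hδ
      obtain ⟨u, v, rfl, hu, hv⟩ := ih (γ := ρ ++ γ) (by simp)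
      exact ⟨a :: u, v, rfl, .prod hp hu, hv⟩
  | @swap η β Y Z w hi hd ih =>
    rcases List.eq_nil_or_concat' β with rfl | ⟨β, B, rfl⟩
    · have hZ : γ ++ [X] = (η ++ [Y]) ++ [Z] := by simpa using hδ
      obtain rfl := List.singleton_inj.1 (List.append_inj' hZ rfl).2
      exact absurd hi (hX Y)
    · have hB : γ ++ [X] = (η ++ Y :: Z :: β) ++ [B] := by simpa using hδ
      obtain ⟨rfl, hXB⟩ := List.append_inj' hB rfl
      obtain rfl := List.singleton_inj.1 hXB
      obtain ⟨u, v, rfl, hu, hv⟩ := ih (γ := η ++ Z :: Y :: β) (by simp)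
      exact ⟨u, v, rfl, .swap hi hu, hv⟩

end PCDerives

/-! ### Context-free derivations -/

namespace PCGrammar

variable {α : Type} {G : PCGrammar α}

/-- Derivations without swap steps, in the shape of derivation trees: the word derived from a
configuration is the concatenation of the words derived from its nonterminals. -/
inductive CFDerives (G : PCGrammar α) : List G.V → List α → Prop
  | nil : CFDerives G [] []
  | cons {X : G.V} {a : α} {γ β : List G.V} {u v : List α} :
      (X, a, γ) ∈ G.prods → CFDerives G γ u → CFDerives G β v →
        CFDerives G (X :: β) (a :: (u ++ v))

/-- The context `(p, q)` turns words derived from the nonterminal `X` into words derived from the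
configuration `γ`. -/
def IsContext (G : PCGrammar α) (γ : List G.V) (X : G.V) (p q : List α) : Prop :=
  ∀ v, G.CFDerives [X] v → G.CFDerives γ (p ++ v ++ q)

namespace CFDerives

variable {γ δ : List G.V} {u v w : List α}

theorem append_s4 (hu : G.CFDerives γ u) (hv : G.CFDerives δ v) :
    G.CFDerives (γ ++ δ) (u ++ v) := by
  induction hu with
  | nil => exact hv
  | cons hp hγ _ _ ih => simpa using CFDerives.cons hp hγ ih

theorem exists_of_append (γ : List G.V) (h : G.CFDerives (γ ++ δ) w) :
    ∃ u v, w = u ++ v ∧ G.CFDerives γ u ∧ G.CFDerives δ v := by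
  induction γ generalizing w with
  | nil => exact ⟨[], w, rfl, .nil, h⟩
  | cons X γ ih =>
    obtain _ | ⟨hp, hX, hγδ⟩ := h
    obtain ⟨u, v, rfl, hu, hv⟩ := ih hγδ
    exact ⟨_, v, by simp, .cons hp hX hu, hv⟩

theorem pcDerives (h : G.CFDerives γ w) : PCDerives G γ w := by
  induction h with
  | nil => exact .nil
  | cons hp _ _ ihγ ihβ => exact .prod hp (ihγ.append_s4 ihβ)

theorem exists_factor_length_mem_Ioc {d : ℕ} (hd : ∀ p ∈ G.prods, p.2.2.length ≤ d) {m : ℕ}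
    (h : G.CFDerives γ w) (hw : m * γ.length < w.length) :
    ∃ X p u q, w = p ++ u ++ q ∧ G.CFDerives [X] u ∧ G.IsContext γ X p q ∧
      u.length ∈ Set.Ioc m (m * d + 1) := by
  induction h with
  | nil => simp at hw
  | @cons X a γ β u v hp hu hv ihγ ihβ =>
    simp only [List.length_cons, List.length_append, mul_add, mul_one] at hw
    by_cases hβ : m * β.length < v.length
    · obtain ⟨Y, p, y, q, rfl, hy, hctx, hlen⟩ := ihβ hβ
      exact ⟨Y, a :: (u ++ p), y, q, by simp, hy,
        fun t ht => by simpa using CFDerives.cons hp hu (hctx t ht), hlen⟩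
    by_cases hγ : m * γ.length < u.length
    · obtain ⟨Y, p, y, q, rfl, hy, hctx, hlen⟩ := ihγ hγ
      exact ⟨Y, a :: p, y, q ++ v, by simp, hy,
        fun t ht => by simpa using CFDerives.cons hp (hctx t ht) hv, hlen⟩
    have hmd : m * γ.length ≤ m * d := Nat.mul_le_mul_left m (hd _ hp)
    refine ⟨X, [], a :: u, v, by simp, by simpa using CFDerives.cons hp hu .nil,
      fun t ht => by simpa using ht.append_s4 hv, ?_⟩
    simp only [List.length_cons, Set.mem_Ioc]
    omega

end CFDerives

/-- The weights, with respect to `f`, of the words derived from those nonterminals that fit into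
some context of the start symbol. -/
def factorWeights {A : Type*} [AddMonoid A] (G : PCGrammar α) (f : α → A) : Set A :=
  ⋃ X, {c | ∃ p q u, G.IsContext [G.start] X p q ∧ G.CFDerives [X] u ∧ (u.map f).sum = c}

theorem finite_factorWeights {A : Type*} [AddCancelMonoid A] {f : α → A} {c : A}
    (hf : ∀ w, G.CFDerives [G.start] w → (w.map f).sum = c) : (G.factorWeights f).Finite := by
  have := G.finV
  refine Set.finite_iUnion fun X => Set.Subsingleton.finite ?_
  rintro _ ⟨p, q, u, hctx, hu, rfl⟩ _ ⟨-, -, v, -, hv, rfl⟩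
  have hweight := (hf _ (hctx u hu)).trans (hf _ (hctx v hv)).symm
  simpa using hweight

theorem exists_factor_sum_mem_factorWeights {A : Type*} [AddMonoid A] (G : PCGrammar α) (f : α → A)
    (m : ℕ) : ∃ k, ∀ w, G.CFDerives [G.start] w → m < w.length →
      ∃ u, u <:+: w ∧ u.length ∈ Set.Ioc m k ∧ (u.map f).sum ∈ G.factorWeights f := by
  obtain ⟨d, hd⟩ := (G.finP.image fun p => p.2.2.length).bddAbove
  refine ⟨m * d + 1, fun w hw hlen => ?_⟩
  obtain ⟨X, p, u, q, rfl, hu, hctx, hmem⟩ :=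
    hw.exists_factor_length_mem_Ioc (fun p hp => hd ⟨p, hp, rfl⟩) (by simpa using hlen)
  exact ⟨u, ⟨p, q, rfl⟩, hmem, Set.mem_iUnion.2 ⟨X, p, q, u, hctx, hu, rfl⟩⟩

/-! ### Transitive dependence and end markers -/

/-- Every word derived from `γ` completes the prefix `x` to a word of the language. This holds if
`γ` is reached from the start symbol after reading `x`, and is all we need to know about reachable
configurations. -/
def IsResidual (G : PCGrammar α) (x : List α) (γ : List G.V) : Prop :=
  ∀ v, PCDerives G γ v → x ++ v ∈ G.lang

namespace IsResidual

variable {e : α} {x w : List α}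

theorem exists_mem_not_indep (he : IsEndMarked e G.lang) {η ζ : List G.V} {X : G.V}
    (hx : G.IsResidual x (η ++ X :: ζ)) (h : PCDerives G (η ++ X :: ζ) w) (hζ : ζ ≠ []) :
    ∃ Y ∈ ζ, ¬ G.indep X Y := by
  by_contra! hi
  obtain ⟨u, hu⟩ := h.exists_of_subset (List.subset_append_left η _)
  obtain ⟨v, hv⟩ := h.exists_of_subset (δ := [X]) (by simp)
  obtain ⟨t, ht⟩ := h.exists_of_subset (δ := ζ) fun _ hA => by simp [hA]
  have hvt : (x ++ u ++ v) ++ t ∈ G.lang := by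
    simpa using hx _ (hu.append_s4 (hv.append_s4 ht))
  have htv : (x ++ u ++ t) ++ v ∈ G.lang := by
    have hmoved := PCDerives.move_left (β := []) ζ η hi (hu.append_s4 (ht.append_s4 hv))
    simpa using hx _ (by simpa using hmoved)
  have hev : e ∈ v := (he.notMem_left_and_mem_right htv (hv.ne_nil (by simp))).2
  exact (he.notMem_left_and_mem_right hvt (ht.ne_nil hζ)).1 (List.mem_append_right _ hev)

theorem not_indep (hG : G.depTransitive) (he : IsEndMarked e G.lang) {η ζ : List G.V}
    (hx : G.IsResidual x (η ++ ζ)) (h : PCDerives G (η ++ ζ) w) :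
    ∀ X ∈ ζ, ∀ Y ∈ ζ, ¬ G.indep X Y := by
  induction ζ generalizing η with
  | nil => simp
  | cons X ζ ih =>
    have hζ : ∀ Y ∈ ζ, ∀ Z ∈ ζ, ¬ G.indep Y Z :=
      ih (η := η ++ [X]) (by simpa using hx) (by simpa using h)
    have hX : ∀ Y ∈ ζ, ¬ G.indep X Y := by
      intro Y hY
      obtain ⟨Z, hZ, hXZ⟩ := exists_mem_not_indep he hx h (List.ne_nil_of_mem hY)
      exact hG X Z Y hXZ (hζ Z hZ Y hY)
    simp only [List.forall_mem_cons]
    exact ⟨⟨G.indep_irrefl X, hX⟩, fun Y hY => ⟨fun hi => hX Y hY (G.indep_symm hi), hζ Y hY⟩⟩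

theorem cfDerives (hG : G.depTransitive) (he : IsEndMarked e G.lang) {γ : List G.V}
    (hx : G.IsResidual x γ) (h : PCDerives G γ w) : G.CFDerives γ w := by
  induction h generalizing x with
  | nil => exact .nil
  | @prod X a γ β w hp _ ih =>
    have hxa : G.IsResidual (x ++ [a]) (γ ++ β) := fun v hv => by
      simpa using hx (a :: v) (.prod hp hv)
    obtain ⟨u, v, rfl, hu, hv⟩ := (ih hxa).exists_of_append γ
    exact .cons hp hu hv
  | swap hi hd =>
    exact absurd hi (not_indep hG he (η := []) hx (.swap hi hd) _ (by simp) _ (by simp))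

end IsResidual

theorem mem_lang_iff_cfDerives (hG : G.depTransitive) {e : α} (he : IsEndMarked e G.lang)
    {w : List α} : w ∈ G.lang ↔ G.CFDerives [G.start] w :=
  ⟨fun h => IsResidual.cfDerives (x := []) hG he (fun _ hv => hv) h, fun h => h.pcDerives⟩

end PCGrammar

/-! ### The witness -/

namespace BalancedMarked

/-- The alphabet of the witness language, with end marker `e`. -/
inductive Letter
  | a | b | c | e
  deriving DecidableEq

instance : Finite Letter :=
  Set.finite_univ_iff.1 <| (Set.toFinite {.a, .b, .c, .e}).subset fun x _ => by cases x <;> simp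

/-- The word `aⁿbⁿcⁿe`. -/
def word (n : ℕ) : List Letter :=
  List.replicate n .a ++ (List.replicate n .b ++ (List.replicate n .c ++ [.e]))

/-- Letter weights whose sum over a word `w` is `(|w|_a - |w|_b, |w|_b - |w|_c)`. -/
def balance : Letter → ℤ × ℤ
  | .a => (1, 0)
  | .b => (-1, 1)
  | .c => (0, -1)
  | .e => (0, 0)

theorem sum_map_balance (w : List Letter) :
    (w.map balance).sum = ((w.count .a : ℤ) - w.count .b, (w.count .b : ℤ) - w.count .c) := by
  induction w with
  | nil => rfl
  | cons x w ih =>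
    rw [List.map_cons, List.sum_cons, ih]
    cases x <;> simp [balance] <;> omega

theorem length_eq_sum_count (w : List Letter) :
    w.length = w.count .a + w.count .b + w.count .c + w.count .e := by
  induction w with
  | nil => rfl
  | cons x w ih => cases x <;> simp [ih] <;> omega

theorem length_le_of_isInfix_word {n : ℕ} {u : List Letter} (hu : u <:+: word n)
    (hn : u.length ≤ n) :
    u.length ≤ 2 * ((u.map balance).sum.1.natAbs + (u.map balance).sum.2.natAbs) + 1 := by
  rw [sum_map_balance, length_eq_sum_count u]
  rcases isInfix_append_or_of_length_le hu (by simpa using hn) with h | h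
  · have hc : u.count .c = 0 := by simpa [List.count_replicate] using h.sublist.count_le .c
    have he : u.count .e = 0 := by simpa [List.count_replicate] using h.sublist.count_le .e
    omega
  · have ha : u.count .a = 0 := by simpa [List.count_replicate] using h.sublist.count_le .a
    have he : u.count .e ≤ 1 := by simpa [List.count_replicate] using h.sublist.count_le .e
    omega

theorem not_isTrPCCFL {L : Set (List Letter)} (hmark : IsEndMarked .e L)
    (hbal : ∀ w ∈ L, (w.map balance).sum = 0) (hword : ∀ n, 2 ≤ n → word n ∈ L) :
    ¬ IsTrPCCFL L := by
  rintro ⟨G, hG, rfl⟩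
  have hfin : (G.factorWeights balance).Finite :=
    PCGrammar.finite_factorWeights fun w hw => hbal w hw.pcDerives
  obtain ⟨M, hM⟩ := (hfin.image fun c => c.1.natAbs + c.2.natAbs).bddAbove
  obtain ⟨k, hk⟩ := G.exists_factor_sum_mem_factorWeights balance (2 * M + 1)
  have hderives : G.CFDerives [G.start] (word (k + 2 * M + 2)) :=
    (PCGrammar.mem_lang_iff_cfDerives hG hmark).1 (hword _ (by omega))
  obtain ⟨u, hu, ⟨hlong, hshort⟩, hmem⟩ := hk _ hderives (by simp [word]; omega)
  have hle := length_le_of_isInfix_word hu (by omega)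
  have hbound := hM ⟨_, hmem, rfl⟩
  simp only at hbound
  omega

/-- The nonterminals of the witness grammar. -/
inductive Symbol
  | T | S | B | C | E
  deriving DecidableEq

instance : Finite Symbol :=
  Set.finite_univ_iff.1 <| (Set.toFinite {.T, .S, .B, .C, .E}).subset fun X _ => by
    cases X <;> simp

/-- The witness grammar. -/
abbrev grammar : PCGrammar Letter where
  V := Symbol
  finV := inferInstance
  start := .T
  prods := {(.T, .a, [.S, .B, .C, .E]), (.S, .a, [.S, .B, .C]), (.S, .a, [.B, .C]),
    (.B, .b, []), (.C, .c, []), (.E, .e, [])}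
  finP := Set.toFinite _
  indep X Y := (X = .B ∧ Y = .C) ∨ (X = .C ∧ Y = .B)
  indep_symm := by tauto
  indep_irrefl := by rintro (_ | _) <;> simp

/-- The contribution of each nonterminal to the `balance` of the words derived from it. -/
def symbolBalance : Symbol → ℤ × ℤ
  | .B => (-1, 1)
  | .C => (0, -1)
  | _ => (0, 0)

theorem sum_map_balance_eq_zero {w : List Letter} (hw : w ∈ grammar.lang) :
    (w.map balance).sum = 0 :=
  PCDerives.sum_map_eq (G := grammar) balance symbolBalance
    (by rintro _ (rfl | rfl | rfl | rfl | rfl | rfl) <;> rfl) hw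

theorem e_notMem_of_derives {γ : List Symbol} {w : List Letter} (hT : .T ∉ γ) (hE : .E ∉ γ)
    (h : PCDerives grammar γ w) : .e ∉ w := by
  let markers : Letter → ℕ := fun x => if x = .e then 1 else 0
  let symbolMarkers : Symbol → ℕ := fun X => if X = .T ∨ X = .E then 1 else 0
  have hγ : (γ.map symbolMarkers).sum = 0 := by
    refine List.sum_eq_zero fun _ hm => ?_
    obtain ⟨X, hX, rfl⟩ := List.mem_map.1 hm
    exact if_neg (by rintro (rfl | rfl) <;> contradiction)
  have hsum : (w.map markers).sum = (γ.map symbolMarkers).sum :=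
    h.sum_map_eq markers symbolMarkers (by rintro _ (rfl | rfl | rfl | rfl | rfl | rfl) <;> rfl)
  intro hmem
  have hzero : markers .e = 0 :=
    List.sum_eq_zero_iff.1 (hsum.trans hγ) _ (List.mem_map_of_mem hmem)
  simp [markers] at hzero

theorem isEndMarked_lang : IsEndMarked .e grammar.lang := by
  intro w hw
  obtain ⟨x, γ, w, rfl, hT, hw⟩ := PCDerives.exists_of_singleton hw
  obtain ⟨rfl, rfl⟩ : x = .a ∧ γ = [.S, .B, .C, .E] := by simpa using hT
  obtain ⟨u, v, rfl, hu, hv⟩ :=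
    PCDerives.exists_of_append_singleton (G := grammar) (γ := [.S, .B, .C]) (X := .E)
      (by simp) hw
  obtain ⟨y, δ, v, rfl, hE, hv⟩ := hv.exists_of_singleton
  obtain ⟨rfl, rfl⟩ : y = .e ∧ δ = [] := by simpa using hE
  obtain rfl := hv.eq_nil
  exact ⟨.a :: u, by simpa using e_notMem_of_derives (by simp) (by simp) hu, rfl⟩

/-- The configuration `BʲCʲE`. -/
def config (j : ℕ) : List Symbol :=
  List.replicate j .B ++ (List.replicate j .C ++ [.E])

theorem derives_of_config_succ {j : ℕ} {η : List Symbol} {w : List Letter}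
    (h : PCDerives grammar (η ++ config (j + 1)) w) :
    PCDerives grammar (η ++ .B :: .C :: config j) w := by
  have hmoved := PCDerives.move_left (G := grammar) (X := .C) (List.replicate j .B) (η ++ [.B])
    (β := List.replicate j .C ++ [.E]) (w := w)
    (by simp +contextual [List.mem_replicate]) (by simpa [config, List.replicate_succ] using h)
  simpa [config] using hmoved

theorem config_derives (j : ℕ) : PCDerives grammar (config j)
    (List.replicate j .b ++ (List.replicate j .c ++ [.e])) := by
  have hE : PCDerives grammar [.E] [.e] := .prod (G := grammar) (γ := []) (by simp) .nil
  exact .replicate_append (by simp) (.replicate_append (by simp) hE j) j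

theorem cons_config_derives (k j : ℕ) : PCDerives grammar (.S :: config j)
    (List.replicate (k + 1) .a ++
      (List.replicate (j + k + 1) .b ++ (List.replicate (j + k + 1) .c ++ [.e]))) := by
  induction k generalizing j with
  | zero =>
    exact .prod (G := grammar) (γ := [.B, .C]) (by simp)
      (derives_of_config_succ (η := []) (config_derives (j + 1)))
  | succ k ih =>
    have hS := derives_of_config_succ (η := [.S]) (ih (j + 1))
    rw [show j + 1 + k + 1 = j + (k + 1) + 1 by omega] at hS
    exact .prod (G := grammar) (γ := [.S, .B, .C]) (by simp) hS

theorem word_mem_lang {n : ℕ} (hn : 2 ≤ n) : word n ∈ grammar.lang := by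
  obtain ⟨k, rfl⟩ := Nat.exists_eq_add_of_le' hn
  have hS := cons_config_derives k 1
  rw [show 1 + k + 1 = k + 2 by omega] at hS
  exact .prod (G := grammar) (γ := [.S, .B, .C, .E]) (by simp) hS

end BalancedMarked

/-- trPCCFL is a strict subclass of PCCFL. -/
theorem trpccfl_strict_subclass_pccfl :
    (∀ (α : Type) (L : Set (List α)), IsTrPCCFL L → IsPCCFL L) ∧
    (∃ (α : Type) (_ : Finite α) (L : Set (List α)), IsPCCFL L ∧ ¬ IsTrPCCFL L) := by
  refine ⟨fun α L ⟨G, _, hG⟩ => ⟨G, hG⟩, BalancedMarked.Letter, inferInstance,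
    BalancedMarked.grammar.lang, ⟨BalancedMarked.grammar, rfl⟩, ?_⟩
  exact BalancedMarked.not_isTrPCCFL BalancedMarked.isEndMarked_lang
    (fun _ => BalancedMarked.sum_map_balance_eq_zero) (fun _ => BalancedMarked.word_mem_lang)
end

section
/- There exists a language that belongs to both trPCCFL and shuffleCFL but does not belong to traceCFL. -/
/-!
Take the nonterminals to commute freely, so that a configuration is a multiset. Such commutative
grammars are both PC-grammars with transitive dependence (distinct nonterminals are independent) and
PA-grammars (the right-hand sides are parallel compositions).

The commutative grammar `S →ᵃ S B C`, `S →ᵇ C`, `B →ᵇ ε`, `C →ᶜ ε` generates, for each of the pairs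
`ab`, `ac`, `bc`, a word that leaves the language when these two adjacent letters are swapped.
A trace closure equal to its language therefore uses the empty independence relation, and the
language would be context-free. But all its words satisfy `#b = #c = #a + 1`, and it contains
`aⁿ bⁿ⁺¹ cⁿ⁺¹`: replacing a short factor of this word by a shorter one, as is possible in
context-free languages, would have to remove equally many `a`, `b` and `c`, but a short factor
cannot contain both an `a` and a `c`.
-/

/-! ### Commutative grammars -/

section CommDerives

variable {V α : Type*} {P : Set (V × α × List V)} {X : V} {a : α} {w : List α}

/-- Derivations of commutative grammars (basic parallel processes): `CommDerives P m w` means that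
the multiset `m` of nonterminals derives `w`, where each step rewrites an arbitrary element of the
multiset. Right-hand sides are lists so that the productions can be shared with PC-grammars. -/
inductive CommDerives (P : Set (V × α × List V)) : Multiset V → List α → Prop
  | nil : CommDerives P 0 []
  | prod {X : V} {a : α} {γ : List V} {m : Multiset V} {w : List α} :
      (X, a, γ) ∈ P → CommDerives P ((γ : Multiset V) + m) w → CommDerives P (X ::ₘ m) (a :: w)

/-- The language of the commutative grammar with productions `P` and initial nonterminal `S`. -/
def commLang (P : Set (V × α × List V)) (S : V) : Language α :=
  {w | CommDerives P {S} w}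

theorem CommDerives.list_induction {R : List V → List α → Prop}
    (perm : ∀ {l l' : List V} {w : List α}, l.Perm l' → R l' w → R l w) (nil : R [] [])
    (prod : ∀ {X : V} {a : α} {γ β : List V} {w : List α},
      (X, a, γ) ∈ P → R (γ ++ β) w → R (X :: β) (a :: w))
    {l : List V} (h : CommDerives P (l : Multiset V) w) : R l w := by
  generalize hm : (l : Multiset V) = m at h
  induction h generalizing l with
  | nil =>
    obtain rfl := Multiset.coe_eq_zero l |>.1 hm
    exact nil
  | @prod X a γ m w hp _ ih =>
    obtain ⟨β, rfl⟩ := Quot.exists_rep m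
    exact perm (Multiset.coe_eq_coe.1 hm) (prod hp (ih rfl))

theorem commDerives_singleton_cons_iff :
    CommDerives P {X} (a :: w) ↔ ∃ γ : List V, (X, a, γ) ∈ P ∧ CommDerives P γ w := by
  constructor
  · intro h
    generalize hm : ({X} : Multiset V) = m at h
    cases h with
    | prod hp h =>
      obtain ⟨rfl, rfl⟩ := Multiset.singleton_eq_cons_iff _ |>.1 hm
      exact ⟨_, hp, by simpa using h⟩
  · rintro ⟨γ, hp, h⟩
    exact .prod (m := 0) hp (by simpa using h)

theorem CommDerives.append {m m' : Multiset V} {w' : List α} (h : CommDerives P m w)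
    (h' : CommDerives P m' w') : CommDerives P (m + m') (w ++ w') := by
  induction h with
  | nil => simpa using h'
  | prod hp _ ih =>
    rw [Multiset.cons_add]
    exact .prod hp (by rwa [← add_assoc])

theorem CommDerives.replicate (h : CommDerives P {X} [a]) (n : ℕ) :
    CommDerives P (Multiset.replicate n X) (List.replicate n a) := by
  induction n with
  | zero => exact .nil
  | succ n ih => simpa [Multiset.replicate_succ, List.replicate_succ] using h.append ih

end CommDerives

/-! ### Commutative grammars as PC-grammars -/

section PCGrammar

variable {α : Type} {G : PCGrammar α} {l l' : List G.V} {w : List α}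

theorem PCDerives.of_perm (hG : ∀ X Y, X ≠ Y → G.indep X Y) (hl : l.Perm l')
    (h : PCDerives G l' w) : PCDerives G l w := by
  suffices ∀ η, PCDerives G (η ++ l') w → PCDerives G (η ++ l) w from this [] h
  clear h
  induction hl with
  | nil => exact fun _ h => h
  | cons X _ ih => exact fun η h => by simpa using ih (η ++ [X]) (by simpa using h)
  | swap X Y l =>
    intro η h
    obtain rfl | hYX := eq_or_ne Y X
    · exact h
    · exact .swap (hG _ _ hYX) h
  | trans _ _ ih₁ ih₂ => exact fun η h => ih₁ η (ih₂ η h)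

theorem pcDerives_iff_commDerives (hG : ∀ X Y, X ≠ Y → G.indep X Y) :
    PCDerives G l w ↔ CommDerives G.prods (l : Multiset G.V) w := by
  refine ⟨fun h => ?_, fun h =>
    h.list_induction (R := PCDerives G) (.of_perm hG) .nil .prod⟩
  induction h with
  | nil => exact .nil
  | prod hp _ ih => exact .prod hp (by rwa [Multiset.coe_add])
  | @swap η β X Y w _ _ ih =>
    have hperm : (η ++ X :: Y :: β).Perm (η ++ Y :: X :: β) := (List.Perm.swap ..).append_left η
    rwa [Multiset.coe_eq_coe.2 hperm]

theorem isTrPCCFL_commLang {V : Type} [hV : Finite V] {P : Set (V × α × List V)} (hP : P.Finite)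
    (S : V) : IsTrPCCFL (commLang P S) := by
  let G : PCGrammar α :=
    { V := V, finV := hV, start := S, prods := P, finP := hP
      indep := (· ≠ ·), indep_symm := Ne.symm, indep_irrefl := fun X h => h rfl }
  refine ⟨G, fun X Y Z hXY hYZ => ?_, Set.ext fun w => ?_⟩
  · exact not_not.2 ((not_not.1 hXY).trans (not_not.1 hYZ))
  · exact pcDerives_iff_commDerives fun _ _ h => h

end PCGrammar

/-! ### Commutative grammars as PA-grammars -/

section PAGrammar

variable {V α : Type}

namespace PATerm

/-- The multiset of nonterminals occurring in a term. -/
def vars : PATerm V → Multiset V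
  | eps => 0
  | var X => {X}
  | seq t u => t.vars + u.vars
  | par t u => t.vars + u.vars

/-- The parallel composition of a list of nonterminals. -/
def parList : List V → PATerm V
  | [] => eps
  | X :: l => (var X).par (parList l)

theorem vars_parList (l : List V) : (parList l).vars = l := by
  induction l with
  | nil => rfl
  | cons X l ih => rw [parList, vars, vars, ih, Multiset.singleton_add, Multiset.cons_coe]

end PATerm

open PATerm

theorem PAEq.vars_eq {t u : PATerm V} (h : PAEq t u) : t.vars = u.vars := by
  induction h with
  | refl => rfl
  | symm _ ih => exact ih.symm
  | trans _ _ ih₁ ih₂ => exact ih₁.trans ih₂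
  | seq_assoc => exact add_assoc _ _ _
  | par_assoc => exact add_assoc _ _ _
  | par_comm => exact add_comm _ _
  | seq_eps_left => exact zero_add _
  | seq_eps_right => exact add_zero _
  | par_eps => exact add_zero _
  | seq_congr _ _ ih₁ ih₂ => exact congrArg₂ (· + ·) ih₁ ih₂
  | par_congr _ _ ih₁ ih₂ => exact congrArg₂ (· + ·) ih₁ ih₂

theorem PAEq.parList_of_perm {l l' : List V} (h : l.Perm l') : PAEq (parList l) (parList l') := by
  induction h with
  | nil => exact .refl _
  | cons X _ ih => exact .par_congr (.refl _) ih
  | swap X Y l =>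
    exact (PAEq.par_assoc ..).symm.trans (.trans (.par_congr (.par_comm ..) (.refl _))
      (.par_assoc ..))
  | trans _ _ ih₁ ih₂ => exact ih₁.trans ih₂

theorem PAEq.parList_append (l l' : List V) :
    PAEq ((parList l).par (parList l')) (parList (l ++ l')) := by
  induction l with
  | nil => exact (PAEq.par_comm ..).trans (.par_eps _)
  | cons X l ih => exact (PAEq.par_assoc ..).trans (.par_congr (.refl _) ih)

/-- The PA-productions that read each right-hand side as a parallel composition. -/
def parProds (P : Set (V × α × List V)) : Set (V × α × PATerm V) :=
  (fun p => (p.1, p.2.1, parList p.2.2)) '' P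

variable {P : Set (V × α × List V)} {t u : PATerm V} {a : α} {w : List α}

theorem PAStep.exists_vars_eq (h : PAStep (parProds P) t a u) :
    ∃ X γ m, (X, a, γ) ∈ P ∧ t.vars = X ::ₘ m ∧ u.vars = (γ : Multiset V) + m := by
  induction h with
  | prod h =>
    obtain ⟨⟨X, a, γ⟩, hp, rfl, rfl, rfl⟩ := h
    exact ⟨X, γ, 0, hp, rfl, by rw [vars_parList, add_zero]⟩
  | @seq_left _ _ u _ _ ih | @par_left _ _ u _ _ ih =>
    obtain ⟨X, γ, m, hp, ht, ht'⟩ := ih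
    exact ⟨X, γ, m + u.vars, hp, by rw [vars, ht, Multiset.cons_add],
      by rw [vars, ht', add_assoc]⟩
  | @par_right t _ _ _ _ ih =>
    obtain ⟨X, γ, m, hp, hu, hu'⟩ := ih
    exact ⟨X, γ, t.vars + m, hp, by rw [vars, hu, Multiset.add_cons],
      by rw [vars, hu', add_left_comm]⟩

theorem PAGen.commDerives (h : PAGen (parProds P) t w) : CommDerives P t.vars w := by
  induction h with
  | done => exact .nil
  | eqv htu _ ih => rwa [htu.vars_eq]
  | step hs _ ih =>
    obtain ⟨X, γ, m, hp, ht, hu⟩ := hs.exists_vars_eq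
    rw [ht]
    exact .prod hp (hu ▸ ih)

theorem CommDerives.paGen {l : List V} (h : CommDerives P (l : Multiset V) w) :
    PAGen (parProds P) (parList l) w := by
  refine h.list_induction (R := fun l w => PAGen (parProds P) (parList l) w)
    (fun hl => .eqv (.parList_of_perm hl)) .done fun hp h => ?_
  exact .step (.par_left (.prod ⟨_, hp, rfl⟩)) (.eqv (.parList_append ..) h)

theorem isShuffleCFL_commLang [hV : Finite V] (hP : P.Finite) (S : V) :
    IsShuffleCFL (commLang P S) := by
  refine ⟨⟨V, hV, S, parProds P, hP.image _⟩, Set.ext fun w => ⟨PAGen.commDerives, fun h => ?_⟩⟩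
  exact .eqv (PAEq.par_eps _).symm (CommDerives.paGen (l := [S]) h)

end PAGrammar

/-! ### A shrinking lemma for context-free languages -/

section Yields

variable {T : Type*} {g : ContextFreeGrammar T} {s s' : List (Symbol T g.NT)} {w w' : List T}

/-- `Yields g s w` means that `w` is read off a forest of derivation trees of `g` whose roots are
labelled by the sentential form `s`. In contrast to `g.Derives`, it supports induction on trees. -/
inductive Yields (g : ContextFreeGrammar T) : List (Symbol T g.NT) → List T → Prop
  | nil : Yields g [] []
  | terminal (t : T) {s : List (Symbol T g.NT)} {w : List T} :
      Yields g s w → Yields g (.terminal t :: s) (t :: w)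
  | nonterminal {r : ContextFreeRule T g.NT} {s : List (Symbol T g.NT)} {w w' : List T} :
      r ∈ g.rules → Yields g r.output w → Yields g s w' →
      Yields g (.nonterminal r.input :: s) (w ++ w')

theorem Yields.append (h : Yields g s w) (h' : Yields g s' w') :
    Yields g (s ++ s') (w ++ w') := by
  induction h with
  | nil => exact h'
  | terminal t _ ih => exact .terminal t ih
  | nonterminal hr ho _ _ ih =>
    rw [List.append_assoc]
    exact .nonterminal hr ho ih

theorem Yields.exists_append_eq (h : Yields g (s ++ s') w) :
    ∃ w₁ w₂, w = w₁ ++ w₂ ∧ Yields g s w₁ ∧ Yields g s' w₂ := by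
  induction s generalizing w with
  | nil => exact ⟨[], w, rfl, .nil, h⟩
  | cons x s ih =>
    rw [List.cons_append] at h
    cases h with
    | terminal t h =>
      obtain ⟨w₁, w₂, rfl, h₁, h₂⟩ := ih h
      exact ⟨t :: w₁, w₂, rfl, .terminal t h₁, h₂⟩
    | @nonterminal _ _ v _ hr ho h =>
      obtain ⟨w₁, w₂, rfl, h₁, h₂⟩ := ih h
      exact ⟨v ++ w₁, w₂, (List.append_assoc ..).symm, .nonterminal hr ho h₁, h₂⟩

theorem Yields.of_mem_rules {r : ContextFreeRule T g.NT} (hr : r ∈ g.rules)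
    (h : Yields g r.output w) : Yields g [.nonterminal r.input] w := by
  simpa using Yields.nonterminal hr h .nil

theorem Yields.of_produces (hs : g.Produces s s') (h : Yields g s' w) : Yields g s w := by
  obtain ⟨r, hr, hrw⟩ := hs
  obtain ⟨p, q, rfl, rfl⟩ := hrw.exists_parts
  obtain ⟨w', w₃, rfl, h', h₃⟩ := h.exists_append_eq
  obtain ⟨w₁, w₂, rfl, h₁, h₂⟩ := h'.exists_append_eq
  exact (h₁.append (.of_mem_rules hr h₂)).append h₃

theorem yields_map_terminal (w : List T) : Yields g (w.map .terminal) w := by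
  induction w with
  | nil => exact .nil
  | cons t w ih => exact .terminal t ih

theorem Yields.derives (h : Yields g s w) : g.Derives s (w.map .terminal) := by
  induction h with
  | nil => rfl
  | terminal t _ ih => exact ih.append_left [.terminal t]
  | @nonterminal r s w w' hr _ _ iho ihs =>
    have hroot : g.Produces [.nonterminal r.input] r.output := ⟨r, hr, .input_output⟩
    rw [List.map_append]
    exact ((hroot.trans_derives iho).append_right s).trans (ihs.append_left _)

theorem yields_iff_derives : Yields g s w ↔ g.Derives s (w.map .terminal) := by
  refine ⟨Yields.derives, fun h => ?_⟩
  induction h using Relation.ReflTransGen.head_induction_on with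
  | refl => exact yields_map_terminal w
  | head hs _ ih => exact ih.of_produces hs

theorem Yields.exists_subtree_length_mem_Ioc {K d : ℕ} (hK : 1 ≤ K)
    (hd : ∀ r ∈ g.rules, r.output.length ≤ d) (h : Yields g s w) (hw : s.length * K < w.length) :
    ∃ A u x z, w = u ++ x ++ z ∧ x.length ∈ Set.Ioc K (d * K) ∧ Yields g [.nonterminal A] x ∧
      ∀ x', Yields g [.nonterminal A] x' → Yields g s (u ++ x' ++ z) := by
  induction h with
  | nil => simp at hw
  | @terminal t s w _ ih =>
    rw [List.length_cons, List.length_cons, add_one_mul] at hw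
    obtain ⟨A, u, x, z, rfl, hx, hA, hrepl⟩ := ih (by omega)
    exact ⟨A, t :: u, x, z, rfl, hx, hA, fun x' hx' => .terminal t (hrepl x' hx')⟩
  | @nonterminal r s w w' hr ho hs iho ihs =>
    rw [List.length_cons, List.length_append, add_one_mul] at hw
    by_cases hw' : s.length * K < w'.length
    · obtain ⟨A, u, x, z, rfl, hx, hA, hrepl⟩ := ihs hw'
      exact ⟨A, w ++ u, x, z, by simp, hx, hA,
        fun x' hx' => by simpa using Yields.nonterminal hr ho (hrepl x' hx')⟩
    by_cases hlen : w.length ≤ d * K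
    · exact ⟨r.input, [], w, w', rfl, ⟨by omega, hlen⟩, .of_mem_rules hr ho,
        fun x' hx' => hx'.append hs⟩
    · have hout : r.output.length * K ≤ d * K := Nat.mul_le_mul_right K (hd r hr)
      obtain ⟨A, u, x, z, rfl, hx, hA, hrepl⟩ := iho (by omega)
      exact ⟨A, u, x, z ++ w', by simp, hx, hA,
        fun x' hx' => by simpa using Yields.nonterminal hr (hrepl x' hx') hs⟩

theorem exists_yields_length_le (g : ContextFreeGrammar T) :
    ∃ M : ℕ, ∀ A w, Yields g [.nonterminal A] w →
      ∃ w', Yields g [.nonterminal A] w' ∧ w'.length ≤ M := by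
  have hshort (A : g.NT) : ∃ M : ℕ, ∀ w, Yields g [.nonterminal A] w →
      ∃ w', Yields g [.nonterminal A] w' ∧ w'.length ≤ M := by
    by_cases hA : ∃ w, Yields g [.nonterminal A] w
    · obtain ⟨w, hw⟩ := hA
      exact ⟨w.length, fun _ _ => ⟨w, hw, le_rfl⟩⟩
    · exact ⟨0, fun w hw => (hA ⟨w, hw⟩).elim⟩
  choose M hM using hshort
  refine ⟨g.rules.sup fun r => M r.input, fun A w hw => ?_⟩
  obtain ⟨w', hw', hlen⟩ := hM A w hw
  cases hw with
  | @nonterminal r _ _ _ hr =>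
    exact ⟨w', hw', hlen.trans (Finset.le_sup (f := fun r => M r.input) hr)⟩

theorem exists_shorter_factor_of_isContextFree {L : Language T} (hL : L.IsContextFree) :
    ∃ N : ℕ, ∀ w ∈ L, N < w.length → ∃ u x z x' : List T,
      w = u ++ x ++ z ∧ x.length ≤ N ∧ x'.length < x.length ∧ u ++ x' ++ z ∈ L := by
  obtain ⟨g, rfl⟩ := hL
  obtain ⟨M, hM⟩ := exists_yields_length_le g
  let d := g.rules.sup fun r => r.output.length
  have hd : ∀ r ∈ g.rules, r.output.length ≤ d := fun r hr =>
    Finset.le_sup (f := fun r : ContextFreeRule T g.NT => r.output.length) hr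
  refine ⟨(d + 1) * (M + 1), fun w hw hlen => ?_⟩
  rw [add_one_mul] at hlen ⊢
  obtain ⟨A, u, x, z, rfl, ⟨hMx, hxd⟩, hx, hrepl⟩ :=
    (yields_iff_derives.2 hw).exists_subtree_length_mem_Ioc (K := M + 1) (by omega) hd
      (by rw [List.length_singleton]; omega)
  obtain ⟨x', hx', hx'M⟩ := hM A x hx
  exact ⟨u, x, z, x', rfl, by omega, by omega, (hrepl x' hx').derives⟩

end Yields

/-! ### Trace closures -/

section Trace

variable {α : Type} {J : α → α → Prop}

theorem traceClosure_swap_mem {L : Set (List α)} {x y : List α} {a b : α} (hab : J a b)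
    (h : x ++ a :: b :: y ∈ traceClosure J L) : x ++ b :: a :: y ∈ traceClosure J L := by
  obtain ⟨v, hv, hvw⟩ := h
  exact ⟨v, hv, hvw.tail (.swap x y hab)⟩

theorem traceClosure_eq_self (hJ : ∀ a b, ¬ J a b) (L : Set (List α)) :
    traceClosure J L = L := by
  refine Set.Subset.antisymm ?_ fun w hw => ⟨w, hw, .refl⟩
  rintro w ⟨v, hv, hvw⟩
  cases hvw.cases_tail with
  | inl h => exact h ▸ hv
  | inr h =>
    obtain ⟨_, -, ⟨_, _, hab⟩⟩ := h
    exact (hJ _ _ hab).elim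

theorem isContextFree_of_isTraceCFL {L : Language α} (hL : IsTraceCFL L)
    (hswap : ∀ a b, a ≠ b → ∃ x y, ¬ (x ++ a :: b :: y ∈ L ↔ x ++ b :: a :: y ∈ L)) :
    L.IsContextFree := by
  obtain ⟨J, hsymm, hirrefl, L₀, hL₀, rfl⟩ := hL
  have hJ : ∀ a b, ¬ J a b := by
    intro a b hab
    obtain ⟨x, y, hxy⟩ := hswap a b fun h => hirrefl b (h ▸ hab)
    exact hxy ⟨traceClosure_swap_mem hab, traceClosure_swap_mem (hsymm a b hab)⟩
  exact (traceClosure_eq_self hJ L₀).symm ▸ hL₀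

end Trace

/-! ### Factors of a product of three words -/

section Factor

variable {α : Type*} {a c : α} {u v x z A B C : List α}

theorem length_lt_of_append_eq_append (h : u ++ v = A ++ B) (hv : a ∈ v) (hB : a ∉ B) :
    u.length < A.length := by
  obtain ⟨l, rfl, rfl⟩ | ⟨l, rfl, rfl⟩ := List.append_eq_append_iff.1 h
  · have hl : l ≠ [] := by
      rintro rfl
      exact hB hv
    simpa using List.length_pos_iff.2 hl
  · exact (hB (List.mem_append_right l hv)).elim

theorem length_lt_of_append_append_eq (h : u ++ x ++ z = A ++ B ++ C) (hax : a ∈ x)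
    (haB : a ∉ B) (haC : a ∉ C) (hcx : c ∈ x) (hcA : c ∉ A) (hcB : c ∉ B) :
    B.length < x.length := by
  have hu : u.length < A.length :=
    length_lt_of_append_eq_append (a := a) (v := x ++ z) (B := B ++ C)
      (by simpa only [List.append_assoc] using h) (by simp [hax]) (by simp [haB, haC])
  have hz : z.length < C.length := by
    have hrev : z.reverse ++ (u ++ x).reverse = C.reverse ++ (A ++ B).reverse := by
      rw [← List.reverse_append, h, List.reverse_append]
    simpa using length_lt_of_append_eq_append (a := c) hrev (by simp [hcx]) (by simp [hcA, hcB])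
  have hlen := congrArg List.length h
  simp only [List.length_append] at hlen
  omega

end Factor

/-! ### The separating language -/

namespace Separating

/-- The alphabet of the separating language. -/
inductive Letter
  | a | b | c
  deriving DecidableEq

/-- The nonterminals of the grammar of the separating language. -/
inductive Nonterminal
  | S | B | C
  deriving DecidableEq

open Letter Nonterminal

instance : Fintype Letter := ⟨{a, b, c}, fun l => by cases l <;> simp⟩

instance : Fintype Nonterminal := ⟨{S, B, C}, fun X => by cases X <;> simp⟩

/-- The productions `S →ᵃ S B C`, `S →ᵇ C`, `B →ᵇ ε` and `C →ᶜ ε`. -/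
def prods : Set (Nonterminal × Letter × List Nonterminal) :=
  {(S, a, [S, B, C]), (S, b, [C]), (B, b, []), (C, c, [])}

/-- The separating language: the words derived from `S` when nonterminals commute. -/
def lang : Language Letter := commLang prods S

theorem finite_prods : prods.Finite := by
  simp [prods]

variable {m : Multiset Nonterminal} {w : List Letter} {n : ℕ}

theorem count_eq_of_commDerives (h : CommDerives prods m w) :
    w.count b = w.count a + m.count B + m.count S ∧
      w.count c = w.count a + m.count C + m.count S := by
  induction h with
  | nil => simp
  | prod hp _ ih =>
    rcases hp with hp | hp | hp | hp <;> cases hp <;>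
      simp at ih ⊢ <;> omega

theorem count_eq_of_mem_lang (h : w ∈ lang) :
    w.count b = w.count a + 1 ∧ w.count c = w.count a + 1 := by
  simpa using count_eq_of_commDerives h

theorem commDerives_cons_a (h : CommDerives prods (S ::ₘ B ::ₘ C ::ₘ m) w) :
    CommDerives prods (S ::ₘ m) (a :: w) :=
  .prod (γ := [S, B, C]) (by simp [prods]) (by simpa [← Multiset.cons_coe] using h)

theorem commDerives_cons_b (h : CommDerives prods (C ::ₘ m) w) :
    CommDerives prods (S ::ₘ m) (b :: w) :=
  .prod (γ := [C]) (by simp [prods]) (by simpa using h)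

theorem commDerives_b : CommDerives prods {B} [b] :=
  commDerives_singleton_cons_iff.2 ⟨[], by simp [prods], .nil⟩

theorem commDerives_c : CommDerives prods {C} [c] :=
  commDerives_singleton_cons_iff.2 ⟨[], by simp [prods], .nil⟩

theorem commDerives_replicate_a_append
    (h : CommDerives prods (S ::ₘ (Multiset.replicate n B + Multiset.replicate n C + m)) w) :
    CommDerives prods (S ::ₘ m) (List.replicate n a ++ w) := by
  induction n generalizing m with
  | zero => simpa using h
  | succ n ih =>
    refine commDerives_cons_a (ih ?_)
    simpa [Multiset.replicate_succ, Multiset.cons_swap C B] using h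

theorem replicate_mem_lang (n : ℕ) :
    List.replicate n a ++ List.replicate (n + 1) b ++ List.replicate (n + 1) c ∈ lang := by
  rw [List.append_assoc]
  refine commDerives_replicate_a_append (m := 0) (commDerives_cons_b ?_)
  simpa [Multiset.replicate_succ] using
    (commDerives_b.replicate n).append (commDerives_c.replicate (n + 1))

theorem bc_mem_lang : [b, c] ∈ lang := replicate_mem_lang 0

theorem abbcc_mem_lang : [a, b, b, c, c] ∈ lang := replicate_mem_lang 1

theorem acbbc_mem_lang : [a, c, b, b, c] ∈ lang := by
  refine commDerives_cons_a (m := 0) ?_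
  rw [show S ::ₘ B ::ₘ C ::ₘ 0 = {C} + S ::ₘ B ::ₘ 0 by decide]
  refine commDerives_c.append (w := [c]) (commDerives_cons_b ?_)
  rw [show C ::ₘ B ::ₘ 0 = {B} + {C} by decide]
  exact commDerives_b.append commDerives_c

theorem c_cons_notMem_lang (w : List Letter) : c :: w ∉ lang := by
  intro h
  obtain ⟨γ, hp, -⟩ := commDerives_singleton_cons_iff.1 h
  simp [prods] at hp

theorem b_cons_a_cons_notMem_lang (w : List Letter) : b :: a :: w ∉ lang := by
  intro h
  obtain ⟨γ, hp, h⟩ := commDerives_singleton_cons_iff.1 h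
  obtain rfl : γ = [C] := by simpa [prods] using hp
  obtain ⟨γ, hp, -⟩ := commDerives_singleton_cons_iff.1 h
  simp [prods] at hp

theorem exists_swap_notMem_lang (l l' : Letter) (h : l ≠ l') :
    ∃ x y, ¬ (x ++ l :: l' :: y ∈ lang ↔ x ++ l' :: l :: y ∈ lang) := by
  cases l <;> cases l'
  case a.b | b.a =>
    exact ⟨[], [b, c, c], by simp [abbcc_mem_lang, b_cons_a_cons_notMem_lang]⟩
  case a.c | c.a => exact ⟨[], [b, b, c], by simp [acbbc_mem_lang, c_cons_notMem_lang]⟩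
  case b.c | c.b => exact ⟨[], [], by simp [bc_mem_lang, c_cons_notMem_lang]⟩
  all_goals exact absurd rfl h

theorem count_add_count_add_count (w : List Letter) :
    w.count a + w.count b + w.count c = w.length := by
  induction w with
  | nil => rfl
  | cons l w ih => cases l <;> simp [← ih] <;> omega

theorem not_isContextFree_lang : ¬ lang.IsContextFree := by
  intro hL
  obtain ⟨N, hN⟩ := exists_shorter_factor_of_isContextFree hL
  have hmem := replicate_mem_lang N
  obtain ⟨u, x, z, x', hw, hxN, hx', hmem'⟩ := hN _ hmem (by simp)
  have hx : 0 < x.count a ∧ 0 < x.count c := by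
    have hcount := count_eq_of_mem_lang (hw ▸ hmem)
    have hcount' := count_eq_of_mem_lang hmem'
    rw [← count_add_count_add_count x, ← count_add_count_add_count x'] at hx'
    simp only [List.count_append] at hcount hcount'
    omega
  have hlen := length_lt_of_append_append_eq hw.symm (List.count_pos_iff.1 hx.1) (by simp)
    (by simp) (List.count_pos_iff.1 hx.2) (by simp) (by simp)
  rw [List.length_replicate] at hlen
  omega

end Separating

/-- some language is in trPCCFL ∩ shuffleCFL but not in traceCFL. -/
theorem exists_trpccfl_shufflecfl_not_tracecfl :
    ∃ (α : Type) (_ : Finite α) (L : Set (List α)),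
      IsTrPCCFL L ∧ IsShuffleCFL L ∧ ¬ IsTraceCFL L := by
  refine ⟨Separating.Letter, inferInstance, Separating.lang, ?_, ?_, fun h => ?_⟩
  · exact isTrPCCFL_commLang Separating.finite_prods _
  · exact isShuffleCFL_commLang Separating.finite_prods _
  · exact Separating.not_isContextFree_lang
      (isContextFree_of_isTraceCFL h Separating.exists_swap_notMem_lang)
end
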